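/- arXiv:1607.07498 — 2 statements merged into one kernel-verified Lean document; each statement's English description precedes it below -/
import Mathlib

section
/- For every z ∈ (0,1), the Liverani–Saussol–Vaienti map f_z admits a unique Borel probability measure on [0,1] that is f_z-invariant and absolutely continuous with respect to Lebesgue measure; moreover this measure is ergodic for f_z. -/
open MeasureTheory Set

/-- The Liverani–Saussol–Vaienti (Pomeau–Manneville type) map with parameter `z`:
`f_z(y) = y(1 + 2^z y^z)` for `y ∈ [0, 1/2)` and `f_z(y) = 2y − 1` for `y ∈ [1/2, 1]`. -/
noncomputable def lsv (z : ℝ) (y : ℝ) : ℝ :=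
  if y < 1 / 2 then y * (1 + 2 ^ z * y ^ z) else 2 * y - 1

open Filter Topology ENNReal

namespace LSV

/-- Left branch. -/
noncomputable def lf (z y : ℝ) : ℝ := y * (1 + 2 ^ z * y ^ z)

/-- Derivative of the left branch. -/
noncomputable def lf' (z y : ℝ) : ℝ := 1 + (1 + z) * (2 ^ z * y ^ z)

/-- Inverse of the left branch. -/
noncomputable def inv (z : ℝ) : ℝ → ℝ := Function.invFunOn (lf z) (Ioc 0 (1 / 2))

theorem u_mono {z a b : ℝ} (hz : z ∈ Ioo (0 : ℝ) 1) (ha : 0 ≤ a) (hab : a ≤ b) :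
    (2 : ℝ) ^ z * a ^ z ≤ 2 ^ z * b ^ z := by
  have := Real.rpow_le_rpow ha hab hz.1.le
  gcongr

theorem u_nonneg {z a : ℝ} (ha : 0 ≤ a) : 0 ≤ (2 : ℝ) ^ z * a ^ z := by positivity

theorem u_half {z : ℝ} : (2 : ℝ) ^ z * (1 / 2) ^ z = 1 := by
  rw [← Real.mul_rpow (by norm_num) (by norm_num)]; norm_num

theorem u_le_one {z a : ℝ} (hz : z ∈ Ioo (0 : ℝ) 1) (ha : 0 ≤ a) (hab : a ≤ 1 / 2) :
    (2 : ℝ) ^ z * a ^ z ≤ 1 := by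
  rw [← u_half (z := z)]; exact u_mono hz ha hab

theorem lf_half {z : ℝ} : lf z (1 / 2) = 1 := by
  unfold lf; rw [u_half]; norm_num

theorem lf_zero {z : ℝ} : lf z 0 = 0 := by simp [lf]

theorem lf_strictMono {z : ℝ} (hz : z ∈ Ioo (0 : ℝ) 1) : StrictMonoOn (lf z) (Ici 0) := by
  intro a ha b hb hab
  have ha' : 0 ≤ a := ha
  unfold lf
  have h1 := u_mono hz ha' hab.le
  have h2 := u_nonneg (z := z) ha'
  nlinarith

theorem lf_cont {z : ℝ} (hz : z ∈ Ioo (0 : ℝ) 1) : Continuous (lf z) := by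
  unfold lf
  have : Continuous fun y : ℝ => y ^ z := Real.continuous_rpow_const hz.1.le
  fun_prop

theorem lf_deriv {z y : ℝ} (hy : 0 < y) : HasDerivAt (lf z) (lf' z y) y := by
  have h1 : HasDerivAt (fun y : ℝ => y ^ z) (z * y ^ (z - 1)) y :=
    Real.hasDerivAt_rpow_const (Or.inl hy.ne')
  have h2 := (hasDerivAt_id y).mul ((h1.const_mul (2 ^ z)).const_add 1)
  refine h2.congr_deriv ?_
  have : y ^ z = y ^ (z - 1) * y := by
    rw [← Real.rpow_add_one hy.ne']; ring_nf
  simp only [lf', id, this]; ring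

theorem inv_spec {z x : ℝ} (hz : z ∈ Ioo (0 : ℝ) 1) (hx : x ∈ Ioc (0 : ℝ) 1) :
    inv z x ∈ Ioc (0 : ℝ) (1 / 2) ∧ lf z (inv z x) = x := by
  have : x ∈ lf z '' Ioc 0 (1 / 2) := by
    have := intermediate_value_Ioc (by norm_num : (0 : ℝ) ≤ 1 / 2) (lf_cont hz).continuousOn
    apply this
    rwa [lf_zero, lf_half]
  exact ⟨Function.invFunOn_mem this, Function.invFunOn_eq this⟩

theorem inv_lf {z y : ℝ} (hz : z ∈ Ioo (0 : ℝ) 1) (hy : y ∈ Ioc (0 : ℝ) (1 / 2)) :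
    inv z (lf z y) = y := by
  have hmem : lf z y ∈ Ioc (0 : ℝ) 1 := by
    constructor
    · rw [← lf_zero (z := z)]; exact lf_strictMono hz (by simp) hy.1.le hy.1
    · rw [← lf_half (z := z)]
      exact (lf_strictMono hz).monotoneOn hy.1.le (by norm_num) hy.2
  obtain ⟨h1, h2⟩ := inv_spec hz hmem
  exact (lf_strictMono hz).injOn h1.1.le hy.1.le h2

theorem inv_lt_half {z x : ℝ} (hz : z ∈ Ioo (0 : ℝ) 1) (hx : x ∈ Ioo (0 : ℝ) 1) :
    inv z x ∈ Ioo (0 : ℝ) (1 / 2) := by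
  obtain ⟨h1, h2⟩ := inv_spec hz (Ioo_subset_Ioc_self hx)
  refine ⟨h1.1, lt_of_le_of_ne h1.2 ?_⟩
  intro h
  rw [h, lf_half] at h2
  exact hx.2.ne h2.symm

theorem lt_inv {z x y : ℝ} (hz : z ∈ Ioo (0 : ℝ) 1) (hx : x ∈ Ioc (0 : ℝ) 1) (hy : 0 ≤ y)
    (h : lf z y < x) : y < inv z x := by
  obtain ⟨h1, h2⟩ := inv_spec hz hx
  rw [← h2] at h
  exact ((lf_strictMono hz).lt_iff_lt hy h1.1.le).1 h

theorem inv_mono {z a b : ℝ} (hz : z ∈ Ioo (0 : ℝ) 1) (ha : a ∈ Ioc (0 : ℝ) 1)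
    (hb : b ∈ Ioc (0 : ℝ) 1) (hab : a ≤ b) : inv z a ≤ inv z b := by
  obtain ⟨h1, h2⟩ := inv_spec hz ha
  obtain ⟨h3, h4⟩ := inv_spec hz hb
  exact ((lf_strictMono hz).le_iff_le h1.1.le h3.1.le).1 (by rw [h2, h4]; exact hab)

/-- the key inequality -/
theorem key {z x : ℝ} (hz : z ∈ Ioo (0 : ℝ) 1) (hx : x ∈ Ioc (0 : ℝ) 1) :
    x + 4 / (1 - z) * (inv z x) ^ (1 - z) ≤ 4 / (1 - z) * x ^ (1 - z) := by
  obtain ⟨⟨h1, h2⟩, h3⟩ := inv_spec hz hx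
  set w := inv z x
  obtain ⟨hz0, hz1⟩ := hz
  have hp : 0 < 1 - z := by linarith
  have hu0 := u_nonneg (z := z) h1.le
  have hu1 := u_le_one ⟨hz0, hz1⟩ h1.le h2
  set u := (2 : ℝ) ^ z * w ^ z with hu
  have hx' : x = w * (1 + u) := h3.symm
  have hB : (1 + u) ^ z ≤ 1 + z * u :=
    rpow_one_add_le_one_add_mul_self (by linarith) hz0.le hz1.le
  have hpos : 0 < (1 + u) ^ z := by positivity
  have hB2 : 1 + (1 - z) * u / 2 ≤ (1 + u) ^ (1 - z) := by
    rw [Real.rpow_sub (by linarith), Real.rpow_one, le_div_iff₀ hpos]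
    have : (1 + (1 - z) * u / 2) * (1 + u) ^ z ≤ (1 + (1 - z) * u / 2) * (1 + z * u) := by
      gcongr
    refine this.trans ?_
    have h5 : 0 ≤ (1 - z) * u * (1 - z * u) := by
      have : z * u ≤ 1 := by nlinarith
      have : 0 ≤ 1 - z * u := by linarith
      positivity
    nlinarith
  have hw : w ^ (1 - z) * u = 2 ^ z * w := by
    rw [hu, mul_left_comm, ← Real.rpow_add h1]; simp
  have h2z : (1 : ℝ) ≤ 2 ^ z := Real.one_le_rpow (by norm_num) hz0.le
  have hxp : x ^ (1 - z) = w ^ (1 - z) * (1 + u) ^ (1 - z) := by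
    rw [hx', Real.mul_rpow h1.le (by linarith)]
  rw [hxp]
  have hwp : 0 ≤ w ^ (1 - z) := by positivity
  have h6 : 4 / (1 - z) * (w ^ (1 - z) * (1 + (1 - z) * u / 2)) ≤
      4 / (1 - z) * (w ^ (1 - z) * (1 + u) ^ (1 - z)) := by gcongr
  refine le_trans ?_ h6
  have h7 : 4 / (1 - z) * (w ^ (1 - z) * (1 + (1 - z) * u / 2)) =
      4 / (1 - z) * w ^ (1 - z) + 2 * (w ^ (1 - z) * u) := by
    field_simp; ring
  rw [h7, hw]
  nlinarith

theorem iter_mem {z x : ℝ} (hz : z ∈ Ioo (0 : ℝ) 1) (hx : x ∈ Ioc (0 : ℝ) 1) (n : ℕ) :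
    (inv z)^[n] x ∈ Ioc (0 : ℝ) 1 := by
  induction n generalizing x with
  | zero => exact hx
  | succ n ih =>
    apply ih
    have := (inv_spec hz hx).1
    exact ⟨this.1, this.2.trans (by norm_num)⟩

theorem sum_le {z x : ℝ} (hz : z ∈ Ioo (0 : ℝ) 1) (hx : x ∈ Ioc (0 : ℝ) 1) (n : ℕ) :
    ∑ k ∈ Finset.range n, (inv z)^[k] x ≤ 4 / (1 - z) * x ^ (1 - z) := by
  induction n generalizing x with
  | zero =>
    have : 0 < 1 - z := by linarith [hz.2]
    have := hx.1
    simp; positivity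
  | succ n ih =>
    rw [Finset.sum_range_succ']
    have h1 : inv z x ∈ Ioc (0 : ℝ) 1 := iter_mem hz hx 1
    have h2 := ih h1
    have h3 := key hz hx
    simp only [Function.iterate_succ_apply, Function.iterate_zero, id]
    linarith

theorem iter_tendsto {z x : ℝ} (hz : z ∈ Ioo (0 : ℝ) 1) (hx : x ∈ Ioc (0 : ℝ) 1) :
    Tendsto (fun n => (inv z)^[n] x) atTop (𝓝 0) := by
  have : Summable (fun n => (inv z)^[n] x) :=
    summable_of_sum_range_le (fun n => (iter_mem hz hx n).1.le) (fun n => sum_le hz hx n)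
  exact this.tendsto_atTop_zero

/-- Transfer operator. -/
noncomputable def P (z : ℝ) (h : ℝ → ℝ≥0∞) (x : ℝ) : ℝ≥0∞ :=
  h (inv z x) / ENNReal.ofReal (lf' z (inv z x)) + h ((x + 1) / 2) / 2

theorem lf'_pos {z y : ℝ} (hz : z ∈ Ioo (0 : ℝ) 1) (hy : 0 ≤ y) : 0 < lf' z y := by
  have := u_nonneg (z := z) hy
  have := hz.1
  unfold lf'; positivity

theorem P_anti {z : ℝ} (hz : z ∈ Ioo (0 : ℝ) 1) {h : ℝ → ℝ≥0∞} (hh : AntitoneOn h (Ioo 0 1)) :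
    AntitoneOn (P z h) (Ioo 0 1) := by
  intro a ha b hb hab
  have h1 := inv_lt_half hz ha
  have h2 := inv_lt_half hz hb
  have h3 := inv_mono hz (Ioo_subset_Ioc_self ha) (Ioo_subset_Ioc_self hb) hab
  unfold P
  apply add_le_add
  · apply ENNReal.div_le_div
    · exact hh ⟨h1.1, by linarith [h1.2]⟩ ⟨h2.1, by linarith [h2.2]⟩ h3
    · apply ENNReal.ofReal_le_ofReal
      have := u_mono hz h1.1.le h3
      have := hz.1
      unfold lf'
      gcongr
  · apply ENNReal.div_le_div_right
    exact hh ⟨by linarith [ha.1], by linarith [ha.2]⟩ ⟨by linarith [hb.1], by linarith [hb.2]⟩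
      (by linarith)

theorem P_lower {z : ℝ} (hz : z ∈ Ioo (0 : ℝ) 1) {h : ℝ → ℝ≥0∞} (hh : AntitoneOn h (Ioo 0 1))
    {x : ℝ} (hx : x ∈ Ioo (0 : ℝ) 1) : h (1 / 2) / 3 ≤ P z h x := by
  have h1 := inv_lt_half hz hx
  refine le_trans ?_ le_self_add
  apply ENNReal.div_le_div
  · exact hh ⟨h1.1, by linarith [h1.2]⟩ ⟨by norm_num, by norm_num⟩ h1.2.le
  · rw [← ENNReal.ofReal_ofNat]
    apply ENNReal.ofReal_le_ofReal
    have := u_le_one hz h1.1.le h1.2.le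
    have := u_nonneg (z := z) h1.1.le
    unfold lf'
    nlinarith [hz.1, hz.2]

theorem lsv_meas (z : ℝ) : Measurable (lsv z) := by
  unfold lsv
  apply Measurable.ite measurableSet_Iio <;> fun_prop

theorem aem {h : ℝ → ℝ≥0∞} (hh : AntitoneOn h (Ioo 0 1)) (A : Set ℝ) :
    AEMeasurable h (volume.restrict (A ∩ Ioo 0 1)) := by
  have : AEMeasurable h (volume.restrict (Ioo 0 1)) :=
    aemeasurable_restrict_of_antitoneOn measurableSet_Ioo hh
  exact this.mono_measure (Measure.restrict_mono inter_subset_right le_rfl)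

theorem left_part {z : ℝ} (hz : z ∈ Ioo (0 : ℝ) 1) (h : ℝ → ℝ≥0∞)
    {A : Set ℝ} (hA : MeasurableSet A) :
    ∫⁻ x in A ∩ Ioo 0 1, h (inv z x) / ENNReal.ofReal (lf' z (inv z x)) =
      ∫⁻ x in lsv z ⁻¹' A ∩ Ioo 0 (1 / 2), h x := by
  have him : lf z '' (lsv z ⁻¹' A ∩ Ioo 0 (1 / 2)) = A ∩ Ioo 0 1 := by
    ext x
    constructor
    · rintro ⟨y, ⟨hy, hy2⟩, rfl⟩
      have : lsv z y = lf z y := by simp only [lsv, lf, if_pos hy2.2]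
      refine ⟨this ▸ hy, ?_, ?_⟩
      · rw [← lf_zero (z := z)]; exact lf_strictMono hz (by simp) hy2.1.le hy2.1
      · rw [← lf_half (z := z)]
        exact (lf_strictMono hz) hy2.1.le (by norm_num) hy2.2
    · rintro ⟨hx, hx2⟩
      have h1 := inv_lt_half hz hx2
      have h2 := (inv_spec hz (Ioo_subset_Ioc_self hx2)).2
      refine ⟨inv z x, ⟨?_, h1⟩, h2⟩
      have : lsv z (inv z x) = lf z (inv z x) := by simp only [lsv, lf, if_pos h1.2]
      rw [mem_preimage, this, h2]; exact hx
  have hm : MeasurableSet (lsv z ⁻¹' A ∩ Ioo 0 (1 / 2)) := (lsv_meas z hA).inter measurableSet_Ioo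
  rw [← him, lintegral_image_eq_lintegral_abs_deriv_mul hm (f' := lf' z)]
  · apply setLIntegral_congr_fun hm
    intro y hy
    have hy2 := hy.2
    simp only
    rw [inv_lf hz (Ioo_subset_Ioc_self hy2)]
    have := lf'_pos hz hy2.1.le
    rw [abs_of_pos this, ENNReal.mul_div_cancel]
    · simpa using this
    · simp
  · intro x hx; exact (lf_deriv hx.2.1).hasDerivWithinAt
  · exact (lf_strictMono hz).injOn.mono (fun x hx => hx.2.1.le)

theorem right_part {z : ℝ} (h : ℝ → ℝ≥0∞)
    {A : Set ℝ} (hA : MeasurableSet A) :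
    ∫⁻ x in A ∩ Ioo 0 1, h ((x + 1) / 2) / 2 =
      ∫⁻ x in lsv z ⁻¹' A ∩ Ioo (1 / 2) 1, h x := by
  have him : (fun y : ℝ => 2 * y - 1) '' (lsv z ⁻¹' A ∩ Ioo (1 / 2) 1) = A ∩ Ioo 0 1 := by
    ext x
    constructor
    · rintro ⟨y, ⟨hy, hy2⟩, rfl⟩
      have : lsv z y = 2 * y - 1 := by simp only [lsv, if_neg (not_lt.2 hy2.1.le)]
      rw [mem_preimage, this] at hy
      refine ⟨hy, ?_, ?_⟩ <;> simp only <;> linarith [hy2.1, hy2.2]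
    · rintro ⟨hx, hx2⟩
      refine ⟨(x + 1) / 2, ⟨?_, by linarith [hx2.1], by linarith [hx2.2]⟩, by ring⟩
      have : lsv z ((x + 1) / 2) = x := by
        rw [lsv, if_neg (by linarith [hx2.1])]; ring
      rw [mem_preimage, this]; exact hx
  have hm : MeasurableSet (lsv z ⁻¹' A ∩ Ioo (1 / 2) 1) := (lsv_meas z hA).inter measurableSet_Ioo
  rw [← him, lintegral_image_eq_lintegral_abs_deriv_mul hm (f' := fun _ => 2)]
  · apply setLIntegral_congr_fun hm
    intro y hy
    simp only
    rw [show (2 * y - 1 + 1) / 2 = y by ring]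
    norm_num
    rw [ENNReal.mul_div_cancel] <;> simp
  · intro x hx
    have := ((hasDerivAt_id x).const_mul 2).sub_const 1
    simpa using this.hasDerivWithinAt
  · intro a _ b _ hab
    simp only at hab
    linarith

theorem split_half (h : ℝ → ℝ≥0∞) {B : Set ℝ} (hB : MeasurableSet B) :
    ∫⁻ x in B ∩ Ioo 0 1, h x =
      (∫⁻ x in B ∩ Ioo 0 (1 / 2), h x) + ∫⁻ x in B ∩ Ioo (1 / 2) 1, h x := by
  rw [← lintegral_union (hB.inter measurableSet_Ioo)]
  · apply setLIntegral_congr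
    have h1 : ∀ᵐ x : ℝ, x ≠ 1 / 2 := by
      simp [ae_iff, measure_singleton]
    filter_upwards [h1] with x hx
    apply propext
    change x ∈ B ∩ Ioo 0 1 ↔ x ∈ B ∩ Ioo 0 (1 / 2) ∪ B ∩ Ioo (1 / 2) 1
    constructor
    · rintro ⟨h2, h3, h4⟩
      rcases lt_or_gt_of_ne hx with h | h
      · exact Or.inl ⟨h2, h3, h⟩
      · exact Or.inr ⟨h2, h, h4⟩
    · rintro (⟨h2, h3, h4⟩ | ⟨h2, h3, h4⟩)
      · exact ⟨h2, h3, by linarith⟩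
      · exact ⟨h2, by linarith, h4⟩
  · rw [Set.disjoint_left]
    rintro x ⟨_, _, h1⟩ ⟨_, h2, _⟩
    linarith

theorem P_int {z : ℝ} (hz : z ∈ Ioo (0 : ℝ) 1) {h : ℝ → ℝ≥0∞} (hh : AntitoneOn h (Ioo 0 1))
    {A : Set ℝ} (hA : MeasurableSet A) :
    ∫⁻ x in A ∩ Ioo 0 1, P z h x = ∫⁻ x in lsv z ⁻¹' A ∩ Ioo 0 1, h x := by
  unfold P
  rw [lintegral_add_right', left_part hz h hA, right_part (z := z) h hA, split_half h (lsv_meas z hA)]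
  have : AntitoneOn (fun x => h ((x + 1) / 2) / 2) (Ioo 0 1) := by
    intro a ha b hb hab
    apply ENNReal.div_le_div_right
    exact hh ⟨by linarith [ha.1], by linarith [ha.2]⟩ ⟨by linarith [hb.1], by linarith [hb.2]⟩
      (by linarith)
  exact aem this A

end LSV
namespace LSV

theorem step {z : ℝ} (hz : z ∈ Ioo (0 : ℝ) 1) {h : ℝ → ℝ≥0∞} (hh : AntitoneOn h (Ioo 0 1))
    {x : ℝ} (hx : x ∈ Ioc (0 : ℝ) 1) :
    ∫⁻ t in Ioo 0 x, P z h t ≤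
      (∫⁻ t in Ioo 0 (inv z x), h t) + h (1 / 2) * ENNReal.ofReal (x / 2) := by
  have e : Ioo 0 x = Ioo 0 x ∩ Ioo 0 1 := by
    rw [Ioo_inter_Ioo]; simp [hx.2]
  rw [e, P_int hz hh measurableSet_Ioo, split_half h (lsv_meas z measurableSet_Ioo)]
  apply add_le_add
  · apply lintegral_mono_set
    rintro y ⟨hy, hy2⟩
    refine ⟨hy2.1, lt_inv hz hx hy2.1.le ?_⟩
    have : lsv z y = lf z y := by simp only [lsv, lf, if_pos hy2.2]
    rw [← this]; exact hy.2
  · have hsub : lsv z ⁻¹' Ioo 0 x ∩ Ioo (1 / 2) 1 ⊆ Ioo (1 / 2) ((x + 1) / 2) := by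
      rintro y ⟨hy, hy2⟩
      have : lsv z y = 2 * y - 1 := by simp only [lsv, if_neg (not_lt.2 hy2.1.le)]
      rw [mem_preimage, this] at hy
      exact ⟨hy2.1, by linarith [hy.2]⟩
    refine (lintegral_mono_set hsub).trans ?_
    calc ∫⁻ t in Ioo (1 / 2) ((x + 1) / 2), h t
        ≤ ∫⁻ t in Ioo (1 / 2) ((x + 1) / 2), h (1 / 2) := by
          apply setLIntegral_mono' measurableSet_Ioo
          intro t ht
          have := hx.2
          exact hh ⟨by norm_num, by norm_num⟩ ⟨by linarith [ht.1], by linarith [ht.2]⟩ ht.1.le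
      _ = h (1 / 2) * ENNReal.ofReal (x / 2) := by
          rw [setLIntegral_const, Real.volume_Ioo]
          congr 2; ring

theorem iter_anti {z : ℝ} (hz : z ∈ Ioo (0 : ℝ) 1) {h : ℝ → ℝ≥0∞} (hh : AntitoneOn h (Ioo 0 1))
    (n : ℕ) : AntitoneOn ((P z)^[n] h) (Ioo 0 1) := by
  induction n with
  | zero => exact hh
  | succ n ih => rw [Function.iterate_succ_apply']; exact P_anti hz ih

theorem iter_int {z : ℝ} (hz : z ∈ Ioo (0 : ℝ) 1) {h : ℝ → ℝ≥0∞} (hh : AntitoneOn h (Ioo 0 1))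
    (n : ℕ) {A : Set ℝ} (hA : MeasurableSet A) :
    ∫⁻ x in A ∩ Ioo 0 1, (P z)^[n] h x = ∫⁻ x in (lsv z)^[n] ⁻¹' A ∩ Ioo 0 1, h x := by
  induction n generalizing A with
  | zero => rfl
  | succ n ih =>
    rw [Function.iterate_succ_apply', P_int hz (iter_anti hz hh n) hA, ih (lsv_meas z hA),
      Function.iterate_succ', preimage_comp]

theorem iter_mass {z : ℝ} (hz : z ∈ Ioo (0 : ℝ) 1) {h : ℝ → ℝ≥0∞} (hh : AntitoneOn h (Ioo 0 1))
    (n : ℕ) : ∫⁻ x in Ioo 0 1, (P z)^[n] h x = ∫⁻ x in Ioo 0 1, h x := by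
  simpa using iter_int hz hh n MeasurableSet.univ

theorem iter_bound {z : ℝ} (hz : z ∈ Ioo (0 : ℝ) 1) {h : ℝ → ℝ≥0∞} (hh : AntitoneOn h (Ioo 0 1))
    {c : ℝ≥0∞} (hc : ∀ n, (P z)^[n] h (1 / 2) ≤ c) (n : ℕ) {x : ℝ} (hx : x ∈ Ioc (0 : ℝ) 1) :
    ∫⁻ t in Ioo 0 x, (P z)^[n] h t ≤ (∫⁻ t in Ioo 0 ((inv z)^[n] x), h t) +
      c * ENNReal.ofReal ((∑ k ∈ Finset.range n, (inv z)^[k] x) / 2) := by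
  induction n generalizing x with
  | zero => simp
  | succ n ih =>
    rw [Function.iterate_succ_apply']
    refine (step hz (iter_anti hz hh n) hx).trans ?_
    have h1 : inv z x ∈ Ioc (0 : ℝ) 1 := iter_mem hz hx 1
    have h2 := ih h1
    have h3 : 0 ≤ ∑ k ∈ Finset.range n, (inv z)^[k] (inv z x) :=
      Finset.sum_nonneg (fun k _ => (iter_mem hz h1 k).1.le)
    have h4 := hx.1
    rw [Finset.sum_range_succ']
    simp only [Function.iterate_succ_apply, Function.iterate_zero, id]
    rw [add_div, ENNReal.ofReal_add (by positivity) (by positivity), mul_add, ← add_assoc]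
    exact add_le_add h2 (mul_le_mul_left (hc n) _)

theorem iter_bound' {z : ℝ} (hz : z ∈ Ioo (0 : ℝ) 1) {h : ℝ → ℝ≥0∞}
    (hh : AntitoneOn h (Ioo 0 1))
    {c : ℝ≥0∞} (hc : ∀ n, (P z)^[n] h (1 / 2) ≤ c) (n : ℕ) {x : ℝ} (hx : x ∈ Ioc (0 : ℝ) 1) :
    ∫⁻ t in Ioo 0 x, (P z)^[n] h t ≤ (∫⁻ t in Ioo 0 ((inv z)^[n] x), h t) +
      c * ENNReal.ofReal (2 / (1 - z) * x ^ (1 - z)) := by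
  refine (iter_bound hz hh hc n hx).trans ?_
  gcongr
  have := sum_le hz hx n
  have e : 2 / (1 - z) * x ^ (1 - z) = (4 / (1 - z) * x ^ (1 - z)) / 2 := by ring
  rw [e]; gcongr

theorem lower {z : ℝ} (hz : z ∈ Ioo (0 : ℝ) 1) {h : ℝ → ℝ≥0∞} (hh : AntitoneOn h (Ioo 0 1))
    (hM : ∫⁻ x in Ioo 0 1, h x ≠ ⊤) :
    ∃ n, ∀ x ∈ Ioo (0 : ℝ) 1,
      (∫⁻ x in Ioo 0 1, h x) * ENNReal.ofReal ((1 - z) / 12) ≤ (P z)^[n] h x := by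
  set M := ∫⁻ x in Ioo 0 1, h x with hMdef
  have hp : 0 < 1 - z := by linarith [hz.2]
  by_cases h0 : M = 0
  · exact ⟨0, by simp [h0]⟩
  by_cases hc : ∀ n, (P z)^[n] h (1 / 2) ≤ M * ENNReal.ofReal ((1 - z) / 4)
  · exfalso
    have h1 : ∀ n, M ≤ (∫⁻ t in Ioo 0 ((inv z)^[n] 1), h t) + M * ENNReal.ofReal (1 / 2) := by
      intro n
      have := iter_bound' hz hh hc n (x := 1) (by simp)
      rw [iter_mass hz hh n, mul_assoc, ← ENNReal.ofReal_mul (by positivity)] at this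
      convert this using 4
      rw [Real.one_rpow]; field_simp; norm_num
    have h2 : Tendsto (fun n => ∫⁻ t in Ioo 0 ((inv z)^[n] 1), h t) atTop (𝓝 0) := by
      have h3 : Tendsto (fun n => ∫⁻ t in Ioo 0 ((inv z)^[n] 1), h t ∂(volume.restrict (Ioo 0 1)))
          atTop (𝓝 0) := by
        apply tendsto_setLIntegral_zero hM
        have h4 : Tendsto (fun n => ENNReal.ofReal ((inv z)^[n] 1)) atTop (𝓝 0) := by
          have := ENNReal.tendsto_ofReal (iter_tendsto hz (x := 1) (by simp))
          simpa using this
        refine tendsto_of_tendsto_of_tendsto_of_le_of_le tendsto_const_nhds h4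
          (fun _ => zero_le) ?_
        intro n
        refine (Measure.restrict_apply_le _ _).trans ?_
        simp [Real.volume_Ioo]
      refine h3.congr fun n => ?_
      rw [Measure.restrict_restrict measurableSet_Ioo, Ioo_inter_Ioo]
      have := (iter_mem hz (x := 1) (by simp) n).2
      simp [this]
    have h5 : M ≤ 0 + M * ENNReal.ofReal (1 / 2) :=
      ge_of_tendsto' (h2.add tendsto_const_nhds) h1
    rw [zero_add] at h5
    have h6 : M * ENNReal.ofReal (1 / 2) < M * 1 := by
      rw [ENNReal.mul_lt_mul_iff_right h0 hM, ENNReal.ofReal_lt_one]; norm_num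
    rw [mul_one] at h6
    exact absurd h5 (not_le.2 h6)
  · push Not at hc
    obtain ⟨n, hn⟩ := hc
    refine ⟨n + 1, fun x hx => ?_⟩
    rw [Function.iterate_succ_apply']
    refine le_trans ?_ (P_lower hz (iter_anti hz hh n) hx)
    refine le_trans ?_ (ENNReal.div_le_div_right hn.le 3)
    rw [mul_div_assoc]
    gcongr
    rw [← ENNReal.ofReal_ofNat, ← ENNReal.ofReal_div_of_pos (by norm_num)]
    apply ENNReal.ofReal_le_ofReal
    linarith

theorem iter_le {z x : ℝ} (hz : z ∈ Ioo (0 : ℝ) 1) (hx : x ∈ Ioc (0 : ℝ) 1) (n : ℕ) :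
    (inv z)^[n] x ≤ x := by
  induction n with
  | zero => exact le_rfl
  | succ n ih =>
    rw [Function.iterate_succ_apply']
    refine le_trans ?_ ih
    obtain ⟨h1, h2⟩ := inv_spec hz (iter_mem hz hx n)
    conv_rhs => rw [← h2]
    unfold lf
    have := u_nonneg (z := z) h1.1.le
    have := h1.1
    nlinarith

theorem upper {z : ℝ} (hz : z ∈ Ioo (0 : ℝ) 1) (n : ℕ) {x : ℝ} (hx : x ∈ Ioo (0 : ℝ) 1) :
    (P z)^[n] (fun _ => 1) x ≤ ENNReal.ofReal ((1 + 4 / (1 - z)) * x ^ (-z)) := by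
  set h : ℝ → ℝ≥0∞ := fun _ => 1 with hdef
  have hp : 0 < 1 - z := by linarith [hz.2]
  have hh : AntitoneOn h (Ioo 0 1) := fun _ _ _ _ _ => le_rfl
  have low : ∀ n, ∀ x ∈ Ioo (0 : ℝ) 1, (P z)^[n] h x * ENNReal.ofReal x ≤
      ∫⁻ t in Ioo 0 x, (P z)^[n] h t := by
    intro n x hx
    calc (P z)^[n] h x * ENNReal.ofReal x = ∫⁻ t in Ioo 0 x, (P z)^[n] h x := by
          rw [setLIntegral_const, Real.volume_Ioo, sub_zero]
      _ ≤ _ := by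
          apply setLIntegral_mono' measurableSet_Ioo
          intro t ht
          exact iter_anti hz hh n ⟨ht.1, ht.2.trans hx.2⟩ hx ht.2.le
  have hc : ∀ n, (P z)^[n] h (1 / 2) ≤ 2 := by
    intro n
    have h1 := low n (1 / 2) ⟨by norm_num, by norm_num⟩
    have h2 : ∫⁻ t in Ioo 0 (1 / 2), (P z)^[n] h t ≤ 1 := by
      refine (lintegral_mono_set (Ioo_subset_Ioo_right (by norm_num : (1 / 2 : ℝ) ≤ 1))).trans ?_
      rw [iter_mass hz hh n]; simp [hdef]
    have h3 := h1.trans h2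
    have h4 : ENNReal.ofReal (1 / 2) = 1 / 2 := by
      rw [ENNReal.ofReal_div_of_pos (by norm_num)]; simp
    rw [h4] at h3
    calc (P z)^[n] h (1 / 2) = (P z)^[n] h (1 / 2) * (1 / 2) * 2 := by
          rw [mul_assoc, ENNReal.div_mul_cancel] <;> simp
      _ ≤ 1 * 2 := by gcongr
      _ = 2 := one_mul 2
  have h1 := low n x hx
  have h2 := iter_bound' hz hh hc n (Ioo_subset_Ioc_self hx)
  have hxpos := hx.1
  have h3 : ∫⁻ t in Ioo 0 ((inv z)^[n] x), h t ≤ ENNReal.ofReal (x ^ (1 - z)) := by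
    simp only [hdef, setLIntegral_const, one_mul, Real.volume_Ioo, sub_zero]
    apply ENNReal.ofReal_le_ofReal
    have h5 : (inv z)^[n] x ≤ x := iter_le hz (Ioo_subset_Ioc_self hx) n
    refine h5.trans ?_
    calc x = x ^ (1 : ℝ) := (Real.rpow_one x).symm
      _ ≤ x ^ (1 - z) := Real.rpow_le_rpow_of_exponent_ge hxpos hx.2.le (by linarith [hz.1])
  have h4 : (P z)^[n] h x * ENNReal.ofReal x ≤
      ENNReal.ofReal ((1 + 4 / (1 - z)) * x ^ (-z)) * ENNReal.ofReal x := by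
    refine (h1.trans h2).trans ?_
    rw [← ENNReal.ofReal_mul (by positivity)]
    refine (add_le_add_left h3 _).trans ?_
    rw [← ENNReal.ofReal_ofNat, ← ENNReal.ofReal_mul (by norm_num),
      ← ENNReal.ofReal_add (by positivity) (by positivity)]
    apply ENNReal.ofReal_le_ofReal
    have e : x ^ (1 - z) = x ^ (-z) * x := by
      rw [← Real.rpow_add_one hxpos.ne']; ring_nf
    rw [e]
    apply le_of_eq; ring
  rwa [ENNReal.mul_le_mul_iff_left] at h4
  · simpa using hxpos
  · simp

end LSV
namespace LSV

theorem erg_step {z : ℝ} (hz : z ∈ Ioo (0 : ℝ) 1) {s : Set ℝ} (hs : MeasurableSet s)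
    (hinv : lsv z ⁻¹' s = s) (k : ℕ) {h : ℝ → ℝ≥0∞} (hh : AntitoneOn h (Ioo 0 1))
    (hM : ∫⁻ x in Ioo 0 1, h x ≠ ⊤) :
    ∫⁻ x in s ∩ Ioo 0 1, h x ≤
      (volume (s ∩ Ioo 0 1) + (1 - ENNReal.ofReal ((1 - z) / 12)) ^ k) * ∫⁻ x in Ioo 0 1, h x := by
  induction k generalizing h with
  | zero =>
    calc ∫⁻ x in s ∩ Ioo 0 1, h x ≤ ∫⁻ x in Ioo 0 1, h x := lintegral_mono_set inter_subset_right
      _ = 1 * ∫⁻ x in Ioo 0 1, h x := (one_mul _).symm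
      _ ≤ _ := by gcongr; simp
  | succ k ih =>
    obtain ⟨n, hn⟩ := lower hz hh hM
    have hiter : (lsv z)^[n] ⁻¹' s = s := by
      clear hn
      induction n with
      | zero => rfl
      | succ n ih => rw [Function.iterate_succ', preimage_comp, hinv, ih]
    have e1 := iter_int hz hh n hs
    have e2 := iter_mass hz hh n
    rw [hiter] at e1
    set g := (P z)^[n] h with hg
    have hganti : AntitoneOn g (Ioo 0 1) := iter_anti hz hh n
    rw [← e1]
    rw [← e2] at hn hM ⊢
    set M := ∫⁻ x in Ioo 0 1, g x with hMd
    set γ := ENNReal.ofReal ((1 - z) / 12) with hγ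
    set α := volume (s ∩ Ioo 0 1) with hα
    have hγ1 : γ ≤ 1 := by
      rw [hγ, ENNReal.ofReal_le_one]; linarith [hz.1]
    have hγt : γ ≠ ⊤ := by simp [hγ]
    obtain ⟨q, hq⟩ : ∃ q, q = 1 - γ := ⟨_, rfl⟩
    have hq1 : γ + q = 1 := by rw [hq]; exact add_tsub_cancel_of_le hγ1
    rw [← hq] at ih ⊢
    have hfanti : AntitoneOn (fun x => g x - M * γ) (Ioo 0 1) :=
      fun a ha b hb hab => tsub_le_tsub_right (hganti ha hb hab) _
    have hsplit : ∀ A, MeasurableSet A → ∫⁻ x in A ∩ Ioo 0 1, g x =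
        M * γ * volume (A ∩ Ioo 0 1) + ∫⁻ x in A ∩ Ioo 0 1, (g x - M * γ) := by
      intro A hA
      rw [← setLIntegral_const, ← lintegral_add_left measurable_const]
      apply setLIntegral_congr_fun (hA.inter measurableSet_Ioo)
      intro x hx
      exact (add_tsub_cancel_of_le (hn x hx.2)).symm
    have hm : ∫⁻ x in Ioo 0 1, (g x - M * γ) = M * q := by
      have h1 := hsplit univ MeasurableSet.univ
      simp only [univ_inter, Real.volume_Ioo, sub_zero, ENNReal.ofReal_one, mul_one] at h1
      rw [← hMd] at h1
      have h2 : M = M * γ + M * q := by rw [← mul_add, hq1, mul_one]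
      have h3 : M * γ + ∫⁻ x in Ioo 0 1, (g x - M * γ) = M * γ + M * q := by
        rw [← h1]; exact h2
      exact (ENNReal.add_right_inj (ENNReal.mul_ne_top hM hγt)).1 h3
    have hqt : q ≠ ⊤ := by rw [hq]; exact ENNReal.sub_ne_top ENNReal.one_ne_top
    have h5 := ih hfanti (by rw [hm]; exact ENNReal.mul_ne_top hM hqt)
    rw [hsplit s hs]
    rw [hm] at h5
    calc M * γ * α + ∫⁻ x in s ∩ Ioo 0 1, (g x - M * γ)
        ≤ M * γ * α + (α + q ^ k) * (M * q) := by gcongr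
      _ = ((γ + q) * α + q ^ (k + 1)) * M := by ring
      _ = (α + q ^ (k + 1)) * M := by rw [hq1, one_mul]

theorem erg_le {z : ℝ} (hz : z ∈ Ioo (0 : ℝ) 1) {s : Set ℝ} (hs : MeasurableSet s)
    (hinv : lsv z ⁻¹' s = s) {h : ℝ → ℝ≥0∞} (hh : AntitoneOn h (Ioo 0 1))
    (hM : ∫⁻ x in Ioo 0 1, h x ≠ ⊤) :
    ∫⁻ x in s ∩ Ioo 0 1, h x ≤ volume (s ∩ Ioo 0 1) * ∫⁻ x in Ioo 0 1, h x := by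
  have h1 : Tendsto (fun k : ℕ => (1 - ENNReal.ofReal ((1 - z) / 12)) ^ k) atTop (𝓝 0) := by
    apply ENNReal.tendsto_pow_atTop_nhds_zero_of_lt_one
    apply ENNReal.sub_lt_self ENNReal.one_ne_top one_ne_zero
    have : 0 < (1 - z) / 12 := by linarith [hz.2]
    simpa using this
  have h2 : Tendsto (fun k : ℕ => (volume (s ∩ Ioo 0 1) +
      (1 - ENNReal.ofReal ((1 - z) / 12)) ^ k) * ∫⁻ x in Ioo 0 1, h x) atTop
      (𝓝 ((volume (s ∩ Ioo 0 1) + 0) * ∫⁻ x in Ioo 0 1, h x)) :=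
    ENNReal.Tendsto.mul_const (tendsto_const_nhds.add h1) (Or.inr hM)
  rw [add_zero] at h2
  exact ge_of_tendsto' h2 (fun k => erg_step hz hs hinv k hh hM)

theorem vol_compl {s : Set ℝ} (hs : MeasurableSet s) :
    volume (s ∩ Ioo (0 : ℝ) 1) + volume (sᶜ ∩ Ioo (0 : ℝ) 1) = 1 := by
  have := measure_inter_add_sdiff (μ := volume) (Ioo (0 : ℝ) 1) hs
  rw [inter_comm, inter_comm sᶜ, ← sdiff_eq, this]; simp

/-- Ergodicity of Lebesgue measure. -/
theorem dichotomy {z : ℝ} (hz : z ∈ Ioo (0 : ℝ) 1) {s : Set ℝ} (hs : MeasurableSet s)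
    (hinv : lsv z ⁻¹' s = s) :
    volume (s ∩ Ioo (0 : ℝ) 1) = 0 ∨ volume (sᶜ ∩ Ioo (0 : ℝ) 1) = 0 := by
  have hinv' : lsv z ⁻¹' sᶜ = sᶜ := by rw [preimage_compl, hinv]
  set α := volume (s ∩ Ioo (0 : ℝ) 1) with hα
  set β := volume (sᶜ ∩ Ioo (0 : ℝ) 1) with hβ
  have hab : α + β = 1 := vol_compl hs
  have key : (volume.restrict (s ∩ Ioo (0 : ℝ) 1)) = α • volume.restrict (Ioo (0 : ℝ) 1) := by
    have hfinite : IsFiniteMeasure (volume.restrict (s ∩ Ioo (0 : ℝ) 1)) := by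
      rw [← Measure.restrict_restrict hs]; infer_instance
    apply Measure.ext_of_Iic
    intro a
    have hanti : AntitoneOn ((Iic a).indicator (fun _ => (1 : ℝ≥0∞))) (Ioo 0 1) := by
      intro x _ y _ hxy
      by_cases hy : y ∈ Iic a
      · have hx : x ∈ Iic a := le_trans hxy hy
        simp [hx, hy]
      · simp [hy]
    have hI : ∀ B : Set ℝ, ∫⁻ x in B, (Iic a).indicator (fun _ => (1 : ℝ≥0∞)) x =
        (volume.restrict B) (Iic a) := by
      intro B
      rw [lintegral_indicator measurableSet_Iic]; simp
    have hfin : (volume.restrict (Ioo (0 : ℝ) 1)) (Iic a) ≠ ⊤ := measure_ne_top _ _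
    have h1 := erg_le hz hs hinv hanti (by rw [hI]; exact hfin)
    have h2 := erg_le hz hs.compl hinv' hanti (by rw [hI]; exact hfin)
    rw [hI, hI] at h1 h2
    have h3 : (volume.restrict (s ∩ Ioo (0 : ℝ) 1)) (Iic a) +
        (volume.restrict (sᶜ ∩ Ioo (0 : ℝ) 1)) (Iic a) =
        (volume.restrict (Ioo (0 : ℝ) 1)) (Iic a) := by
      rw [← Measure.restrict_restrict hs, ← Measure.restrict_restrict hs.compl,
        ← Measure.add_apply, Measure.restrict_add_restrict_compl hs]
    rw [Measure.smul_apply, smul_eq_mul]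
    apply le_antisymm h1
    set m := (volume.restrict (Ioo (0 : ℝ) 1)) (Iic a)
    have h4 : α * m + β * m = m := by rw [← add_mul, hab, one_mul]
    have hβt : β * m ≠ ⊤ := by
      apply ENNReal.mul_ne_top _ hfin
      intro h; rw [h] at hab; simp at hab
    have h5 : α * m + β * m ≤ (volume.restrict (s ∩ Ioo (0 : ℝ) 1)) (Iic a) + β * m := by
      rw [h4]
      calc m = _ := h3.symm
        _ ≤ _ := by gcongr
    exact (ENNReal.add_le_add_iff_right hβt).1 h5
  have h1 := congrArg (fun m : Measure ℝ => m sᶜ) key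
  simp only [Measure.smul_apply, smul_eq_mul] at h1
  rw [Measure.restrict_apply hs.compl, Measure.restrict_apply hs.compl] at h1
  have h2 : sᶜ ∩ (s ∩ Ioo (0 : ℝ) 1) = ∅ := by
    rw [← inter_assoc]; simp
  rw [h2, measure_empty] at h1
  exact mul_eq_zero.1 h1.symm

theorem ergodic_of_ac {z : ℝ} (hz : z ∈ Ioo (0 : ℝ) 1) {μ : Measure ℝ}
    (h0 : μ (Icc (0 : ℝ) 1)ᶜ = 0) (hac : μ ≪ volume) (hmp : MeasurePreserving (lsv z) μ μ) :
    Ergodic (lsv z) μ := by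
  have h1 : μ (Ioo (0 : ℝ) 1)ᶜ = 0 := by
    have hsub : (Ioo (0 : ℝ) 1)ᶜ ⊆ (Icc (0 : ℝ) 1)ᶜ ∪ ({0} ∪ {1}) := by
      intro x hx
      by_contra hcon
      simp only [mem_union, mem_compl_iff, mem_singleton_iff, not_or, not_not] at hcon
      obtain ⟨⟨a, b⟩, c, d⟩ := hcon
      exact hx ⟨lt_of_le_of_ne a (Ne.symm c), lt_of_le_of_ne b d⟩
    refine measure_mono_null hsub (measure_union_null h0 (measure_union_null ?_ ?_)) <;>
    exact hac (by simp)
  have h2 : ∀ t : Set ℝ, volume (t ∩ Ioo (0 : ℝ) 1) = 0 → μ t = 0 := by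
    intro t ht
    have : t ⊆ (t ∩ Ioo (0 : ℝ) 1) ∪ (Ioo (0 : ℝ) 1)ᶜ := by
      intro x hx
      by_cases h : x ∈ Ioo (0 : ℝ) 1
      · exact Or.inl ⟨hx, h⟩
      · exact Or.inr h
    exact measure_mono_null this (measure_union_null (hac ht) h1)
  refine ⟨hmp, ⟨?_⟩⟩
  intro s hs hinv
  rw [eventuallyConst_set']
  rcases dichotomy hz hs hinv with h | h
  · left; rw [ae_eq_empty]; exact h2 s h
  · right; rw [ae_eq_univ]; exact h2 _ h

/-- General construction: ultrafilter limits of dominated measures. -/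
theorem exists_limit (a : ℕ → Measure ℝ) (ν : Measure ℝ) [IsFiniteMeasure ν]
    (ha : ∀ n, a n ≤ ν) :
    ∃ μ : Measure ℝ, ∀ s, MeasurableSet s →
      Tendsto (fun n => a n s) (hyperfilter ℕ : Filter ℕ) (𝓝 (μ s)) := by
  have hex : ∀ s, ∃ l, Tendsto (fun n => a n s) (hyperfilter ℕ : Filter ℕ) (𝓝 l) := by
    intro s
    exact ⟨_, ((hyperfilter ℕ).map (fun n => a n s)).le_nhds_lim⟩
  choose m hm using hex
  have m0 : m ∅ = 0 := tendsto_nhds_unique (hm ∅) (by simp)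
  have madd : ∀ s t, MeasurableSet t → Disjoint s t → m (s ∪ t) = m s + m t := by
    intro s t ht hst
    refine tendsto_nhds_unique (hm _) ?_
    refine ((hm s).add (hm t)).congr fun n => ?_
    rw [measure_union hst ht]
  have mle : ∀ s, m s ≤ ν s := fun s => le_of_tendsto' (hm s) (fun n => ha n s)
  have mU : ∀ ⦃f : ℕ → Set ℝ⦄ (_ : ∀ i, MeasurableSet (f i)),
      Pairwise (Function.onFun Disjoint f) → m (⋃ i, f i) = ∑' i, m (f i) := by
    intro f hf hd
    have hk : ∀ k, m (⋃ i, f i) = ∑ i ∈ Finset.range k, m (f i) + m (⋃ i, f (i + k)) := by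
      intro k
      induction k with
      | zero => simp
      | succ k ih =>
        rw [ih, Finset.sum_range_succ, add_assoc]
        congr 1
        have : (⋃ i, f (i + k)) = f k ∪ ⋃ i, f (i + (k + 1)) := by
          ext x
          simp only [mem_iUnion, mem_union]
          constructor
          · rintro ⟨i, hi⟩
            rcases i with _ | i
            · left; simpa using hi
            · right; exact ⟨i, by convert hi using 2; ring⟩
          · rintro (h | ⟨i, hi⟩)
            · exact ⟨0, by simpa using h⟩
            · exact ⟨i + 1, by convert hi using 2; ring⟩
        rw [this]
        apply madd _ _ (MeasurableSet.iUnion fun i => hf _)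
        rw [disjoint_iUnion_right]
        intro i
        apply hd; omega
    have ht : Tendsto (fun k => m (⋃ i, f (i + k))) atTop (𝓝 0) := by
      have h1 : ∑' i, ν (f i) ≠ ⊤ := by
        rw [← measure_iUnion hd hf]; exact measure_ne_top _ _
      refine tendsto_of_tendsto_of_tendsto_of_le_of_le tendsto_const_nhds
        (ENNReal.tendsto_sum_nat_add _ h1) (fun _ => zero_le) ?_
      intro k
      exact (mle _).trans (measure_iUnion_le _)
    have h2 : Tendsto (fun k => ∑ i ∈ Finset.range k, m (f i) + m (⋃ i, f (i + k))) atTop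
        (𝓝 (∑' i, m (f i) + 0)) := (ENNReal.tendsto_nat_tsum _).add ht
    rw [add_zero] at h2
    exact tendsto_nhds_unique (tendsto_const_nhds.congr hk) h2
  refine ⟨Measure.ofMeasurable (fun s _ => m s) m0 mU, fun s hs => ?_⟩
  rw [Measure.ofMeasurable_apply s hs]
  exact hm s

theorem exists_acip {z : ℝ} (hz : z ∈ Ioo (0 : ℝ) 1) :
    ∃ μ : Measure ℝ, IsProbabilityMeasure μ ∧ μ (Icc (0 : ℝ) 1)ᶜ = 0 ∧
      μ ≪ volume ∧ MeasurePreserving (lsv z) μ μ := by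
  set g : ℝ → ℝ≥0∞ := fun x => ENNReal.ofReal ((1 + 4 / (1 - z)) * x ^ (-z)) with hg
  set ν : Measure ℝ := (volume.restrict (Ioo (0 : ℝ) 1)).withDensity g with hν
  have hT := lsv_meas z
  set l : ℕ → Measure ℝ := fun k => (volume.restrict (Ioo (0 : ℝ) 1)).map ((lsv z)^[k]) with hl
  have hlap : ∀ k s, MeasurableSet s → l k s = volume ((lsv z)^[k] ⁻¹' s ∩ Ioo (0 : ℝ) 1) := by
    intro k s hs
    rw [hl]
    simp only
    rw [Measure.map_apply (hT.iterate k) hs, Measure.restrict_apply (hT.iterate k hs)]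
  have hlν : ∀ k, l k ≤ ν := by
    intro k
    rw [Measure.le_iff]
    intro s hs
    have hanti : AntitoneOn (fun _ : ℝ => (1 : ℝ≥0∞)) (Ioo 0 1) := fun _ _ _ _ _ => le_rfl
    have h1 := iter_int hz hanti k hs
    rw [setLIntegral_one] at h1
    rw [hlap k s hs, ← h1, hν, withDensity_apply _ hs, Measure.restrict_restrict hs]
    apply setLIntegral_mono' (hs.inter measurableSet_Ioo)
    intro x hx
    exact upper hz k hx.2
  have hlprob : ∀ k, l k univ = 1 := by
    intro k
    rw [hlap k univ MeasurableSet.univ]; simp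
  have hfin : IsFiniteMeasure ν := by
    apply isFiniteMeasure_withDensity_ofReal
    apply Integrable.hasFiniteIntegral
    apply Integrable.const_mul
    have := (intervalIntegral.intervalIntegrable_rpow' (a := 0) (b := 1) (r := -z)
      (by linarith [hz.2]))
    rw [intervalIntegrable_iff_integrableOn_Ioo_of_le (by norm_num)] at this
    exact this
  set a : ℕ → Measure ℝ := fun n => ((n : ℝ≥0∞) + 1)⁻¹ • ∑ k ∈ Finset.range (n + 1), l k with ha
  have haap : ∀ n s, a n s = ((n : ℝ≥0∞) + 1)⁻¹ * ∑ k ∈ Finset.range (n + 1), l k s := by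
    intro n s
    simp [ha]
  have hcancel : ∀ n : ℕ, ((n : ℝ≥0∞) + 1)⁻¹ * ((n : ℝ≥0∞) + 1) = 1 := fun n =>
    ENNReal.inv_mul_cancel (by simp) (by simp)
  have haν : ∀ n, a n ≤ ν := by
    intro n
    rw [Measure.le_iff]
    intro s _
    rw [haap]
    calc _ ≤ ((n : ℝ≥0∞) + 1)⁻¹ * ∑ k ∈ Finset.range (n + 1), ν s := by
          gcongr with k hk; exact hlν k
      _ = ν s := by
          simp only [Finset.sum_const, Finset.card_range, nsmul_eq_mul, Nat.cast_add, Nat.cast_one]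
          rw [← mul_assoc, hcancel, one_mul]
  obtain ⟨μ, hμ⟩ := exists_limit a ν haν
  have hμν : μ ≤ ν := by
    rw [Measure.le_iff]
    intro s hs
    exact le_of_tendsto' (hμ s hs) (fun n => haν n s)
  refine ⟨μ, ⟨?_⟩, ?_, ?_, hT, ?_⟩
  · refine tendsto_nhds_unique (hμ univ MeasurableSet.univ) ?_
    refine tendsto_const_nhds.congr fun n => ?_
    rw [haap]
    simp only [hlprob, Finset.sum_const, Finset.card_range, nsmul_eq_mul, Nat.cast_add,
      Nat.cast_one, mul_one]
    exact (hcancel n).symm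
  · have : ν (Icc (0 : ℝ) 1)ᶜ = 0 := by
      apply withDensity_absolutelyContinuous
      rw [Measure.restrict_apply measurableSet_Icc.compl]
      have : (Icc (0 : ℝ) 1)ᶜ ∩ Ioo 0 1 = ∅ := by
        ext x; constructor
        · rintro ⟨h1, h2⟩; exact h1 (Ioo_subset_Icc_self h2)
        · simp
      rw [this, measure_empty]
    exact le_antisymm ((hμν _).trans this.le) zero_le
  · exact (Measure.absolutelyContinuous_of_le hμν).trans
      ((withDensity_absolutelyContinuous _ _).trans Measure.absolutelyContinuous_restrict)
  · ext s hs
    rw [Measure.map_apply hT hs]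
    have hinvt : Tendsto (fun n : ℕ => ((n : ℝ≥0∞) + 1)⁻¹) (hyperfilter ℕ : Filter ℕ) (𝓝 0) := by
      have h1 : Tendsto (fun n : ℕ => (((n + 1 : ℕ) : ℝ≥0∞))⁻¹) atTop (𝓝 0) :=
        (tendsto_add_atTop_iff_nat (f := fun n : ℕ => ((n : ℝ≥0∞))⁻¹) 1).2
          ENNReal.tendsto_inv_nat_nhds_zero
      have h2 : ((hyperfilter ℕ : Ultrafilter ℕ) : Filter ℕ) ≤ atTop := by
        rw [← Nat.cofinite_eq_atTop]; exact hyperfilter_le_cofinite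
      simpa using h1.mono_left h2
    have hsmall : ∀ c : ℕ → ℝ≥0∞, (∀ n, c n ≤ 1) →
        Tendsto (fun n : ℕ => ((n : ℝ≥0∞) + 1)⁻¹ * c n) (hyperfilter ℕ : Filter ℕ) (𝓝 0) := by
      intro c hc
      refine tendsto_of_tendsto_of_tendsto_of_le_of_le tendsto_const_nhds hinvt
        (fun _ => zero_le) fun n => ?_
      calc ((n : ℝ≥0∞) + 1)⁻¹ * c n ≤ ((n : ℝ≥0∞) + 1)⁻¹ * 1 := by gcongr; exact hc n
        _ = _ := mul_one _
    have hle1 : ∀ k, l k s ≤ 1 := fun k => by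
      rw [← hlprob k]; exact measure_mono (subset_univ _)
    have t1 := (hμ _ (hT hs)).add (hsmall (fun _ => l 0 s) (fun _ => hle1 0))
    have t2 := (hμ s hs).add (hsmall (fun n => l (n + 1) s) (fun n => hle1 _))
    rw [add_zero] at t1 t2
    refine tendsto_nhds_unique t1 (t2.congr fun n => ?_)
    have hshift : ∀ k, l k (lsv z ⁻¹' s) = l (k + 1) s := by
      intro k
      rw [hlap k _ (hT hs), hlap (k + 1) s hs, Function.iterate_succ', preimage_comp]
    rw [haap, haap, ← mul_add, ← mul_add, ← Finset.sum_range_succ]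
    simp only [hshift]
    rw [Finset.sum_range_succ' (fun k => l k s)]

end LSV

/-- For every `z ∈ (0,1)` the LSV map `f_z` admits a unique Borel probability
measure on `[0,1]` which is `f_z`-invariant and absolutely continuous with respect to
Lebesgue measure; moreover this measure is ergodic for `f_z`. -/
theorem lsv_exists_unique_acip (z : ℝ) (hz : z ∈ Set.Ioo (0 : ℝ) 1) :
    ∃ μ : Measure ℝ, IsProbabilityMeasure μ ∧ μ (Set.Icc (0 : ℝ) 1)ᶜ = 0 ∧
      μ ≪ volume ∧ MeasurePreserving (lsv z) μ μ ∧ Ergodic (lsv z) μ ∧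
      ∀ ν : Measure ℝ, IsProbabilityMeasure ν → ν (Set.Icc (0 : ℝ) 1)ᶜ = 0 →
        ν ≪ volume → MeasurePreserving (lsv z) ν ν → ν = μ := by
  obtain ⟨μ, hμp, hμ0, hμac, hμ⟩ := LSV.exists_acip hz
  refine ⟨μ, hμp, hμ0, hμac, hμ, LSV.ergodic_of_ac hz hμ0 hμac hμ, ?_⟩
  intro ν hνp hν0 hνac hν
  have hmp : MeasurePreserving (lsv z) (μ + ν) (μ + ν) := by
    refine ⟨LSV.lsv_meas z, ?_⟩
    rw [Measure.map_add _ _ (LSV.lsv_meas z), hμ.map_eq, hν.map_eq]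
  have hac : μ + ν ≪ volume := by
    intro s hs
    rw [Measure.add_apply, hμac hs, hνac hs, add_zero]
  have herg := LSV.ergodic_of_ac hz (μ := μ + ν)
    (by rw [Measure.add_apply, hμ0, hν0, add_zero]) hac hmp
  obtain ⟨c, hc⟩ := herg.eq_smul_of_absolutelyContinuous hμ
    (Measure.absolutelyContinuous_of_le (Measure.le_add_right le_rfl))
  obtain ⟨d, hd⟩ := herg.eq_smul_of_absolutelyContinuous hν
    (Measure.absolutelyContinuous_of_le (Measure.le_add_left le_rfl))
  have h1 := congrArg (fun m : Measure ℝ => m univ) hc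
  have h2 := congrArg (fun m : Measure ℝ => m univ) hd
  simp only [Measure.smul_apply, Measure.add_apply, measure_univ, smul_eq_mul] at h1 h2
  have h3 : c = d := by
    have h4 : c * (1 + 1) = d * (1 + 1) := by rw [← h1, ← h2]
    exact (ENNReal.mul_left_inj (by simp) (by simp)).1 h4
  rw [hd, ← h3, ← hc]
end

section
/- Let z ∈ (1/2, 1) and let μ be the unique absolutely continuous f_z-invariant Borel probability measure on [0,1]. Then there exist Hölder continuous functions φ, ψ : [0,1] → ℝ such that ∑_{n=1}^∞ |∫ φ·(ψ ∘ f_z^n) dμ − (∫ φ dμ)(∫ ψ dμ)| = ∞; that is, correlations of Hölder observables are not summable. -/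
open MeasureTheory Set NNReal

/-- left branch -/
noncomputable def lbr (z : ℝ) (y : ℝ) : ℝ := y * (1 + 2 ^ z * y ^ z)

lemma lbr_strictMono {z : ℝ} (hz : 0 < z) : StrictMonoOn (lbr z) (Ici 0) := by
  intro a ha b hb hab
  simp only [mem_Ici] at ha hb
  unfold lbr
  have h1 : a ^ z ≤ b ^ z := Real.rpow_le_rpow ha hab.le hz.le
  have h2 : (0:ℝ) < 2 ^ z := by positivity
  have h3 : 0 ≤ a ^ z := Real.rpow_nonneg ha z
  apply mul_lt_mul hab _ (by positivity) hb
  nlinarith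

lemma lbr_half {z : ℝ} : lbr z (1/2) = 1 := by
  unfold lbr
  rw [← Real.mul_rpow (by norm_num) (by norm_num)]
  norm_num

lemma lbr_zero {z : ℝ} : lbr z 0 = 0 := by simp [lbr]

lemma lbr_cont {z : ℝ} (hz : 0 < z) : Continuous (lbr z) := by
  unfold lbr
  exact continuous_id.mul (continuous_const.add (continuous_const.mul
    (Real.continuous_rpow_const hz.le)))

lemma lbr_convex {z : ℝ} (hz : 0 < z) : ConvexOn ℝ (Ici 0) (lbr z) := by
  have h1 : ConvexOn ℝ (Ici 0) (fun y : ℝ => y ^ (1 + z)) := convexOn_rpow (by linarith)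
  have h2 : ConvexOn ℝ (Ici 0) (fun y : ℝ => y) := convexOn_id (convex_Ici 0)
  have h3 := h2.add (h1.smul (c := (2:ℝ) ^ z) (by positivity))
  refine h3.congr ?_
  intro y hy
  simp only [mem_Ici] at hy
  simp only [lbr, Pi.add_apply, smul_eq_mul]
  rw [Real.rpow_add_of_nonneg hy (by norm_num) hz.le, Real.rpow_one]
  ring

/-- inverse of left branch -/
noncomputable def gl (z : ℝ) : ℝ → ℝ := Function.invFunOn (lbr z) (Icc 0 (1/2))

lemma gl_spec {z : ℝ} (hz : 0 < z) {t : ℝ} (ht : t ∈ Icc (0:ℝ) 1) :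
    gl z t ∈ Icc (0:ℝ) (1/2) ∧ lbr z (gl z t) = t := by
  have h : t ∈ lbr z '' Icc 0 (1/2) := by
    apply intermediate_value_Icc (by norm_num) (lbr_cont hz).continuousOn
    rwa [lbr_zero, lbr_half]
  exact ⟨Function.invFunOn_mem h, Function.invFunOn_eq h⟩

lemma gl_le_iff {z : ℝ} (hz : 0 < z) {t y : ℝ} (ht : t ∈ Icc (0:ℝ) 1) (hy : 0 ≤ y) :
    lbr z y ≤ t ↔ y ≤ gl z t := by
  obtain ⟨h1, h2⟩ := gl_spec hz ht
  conv_lhs => rw [← h2]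
  exact (lbr_strictMono hz).le_iff_le hy h1.1

lemma le_gl_iff {z : ℝ} (hz : 0 < z) {t y : ℝ} (ht : t ∈ Icc (0:ℝ) 1) (hy : 0 ≤ y) :
    t ≤ lbr z y ↔ gl z t ≤ y := by
  obtain ⟨h1, h2⟩ := gl_spec hz ht
  conv_lhs => rw [← h2]
  exact (lbr_strictMono hz).le_iff_le h1.1 hy

lemma gl_mono {z : ℝ} (hz : 0 < z) : MonotoneOn (gl z) (Icc 0 1) := by
  intro a ha b hb hab
  rw [← le_gl_iff hz ha (gl_spec hz hb).1.1, (gl_spec hz hb).2]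
  exact hab

lemma gl_maps {z : ℝ} (hz : 0 < z) {t : ℝ} (ht : t ∈ Icc (0:ℝ) 1) : gl z t ∈ Icc (0:ℝ) 1 := by
  have := (gl_spec hz ht).1
  exact ⟨this.1, by linarith [this.2]⟩

lemma gl_zero {z : ℝ} (hz : 0 < z) : gl z 0 = 0 := by
  have h0 : (0:ℝ) ∈ Icc (0:ℝ) 1 := by simp
  have h1 := (le_gl_iff hz h0 le_rfl).1 (by rw [lbr_zero])
  linarith [(gl_spec hz h0).1.1]

lemma gl_one {z : ℝ} (hz : 0 < z) : gl z 1 = 1/2 := by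
  have h0 : (1:ℝ) ∈ Icc (0:ℝ) 1 := by simp
  have h1 := (gl_le_iff hz h0 (y := 1/2) (by norm_num)).1 (by rw [lbr_half])
  linarith [(gl_spec hz h0).1.2]

lemma gl_concave {z : ℝ} (hz : 0 < z) : ConcaveOn ℝ (Icc 0 1) (gl z) := by
  refine ⟨convex_Icc 0 1, ?_⟩
  intro a ha b hb p q hp hq hpq
  have hm := convex_Icc (0:ℝ) 1 ha hb hp hq hpq
  obtain ⟨a1, a2⟩ := gl_spec hz ha
  obtain ⟨b1, b2⟩ := gl_spec hz hb
  have h := (lbr_convex hz).2 a1.1 b1.1 hp hq hpq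
  rw [a2, b2] at h
  refine (gl_le_iff hz hm ?_).1 h
  have := a1.1
  have := b1.1
  simp only [smul_eq_mul]
  positivity

lemma gl_half_le {z : ℝ} (hz : 0 < z) {t : ℝ} (ht : t ∈ Icc (0:ℝ) 1) : t / 2 ≤ gl z t := by
  have h := (gl_concave hz).2 (x := 1) (y := 0) (by simp) (by simp) ht.1
    (sub_nonneg.2 ht.2) (by ring)
  simp only [gl_zero hz, gl_one hz, smul_eq_mul, mul_one, mul_zero, add_zero] at h
  linarith

/-- subadditivity -/
lemma gl_sub {z : ℝ} (hz : 0 < z) {a b : ℝ} (ha : 0 ≤ a) (hab : a ≤ b) (hb : b ≤ 1) :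
    gl z b - gl z a ≤ gl z (b - a) := by
  rcases eq_or_lt_of_le (ha.trans hab) with h0 | h0
  · have h1 : a = 0 := by linarith
    subst h1
    rw [gl_zero hz]; simp
  have key : ∀ s, 0 ≤ s → s ≤ b → s / b * gl z b ≤ gl z s := by
    intro s hs hsb
    have h := (gl_concave hz).2 (show b ∈ Icc (0:ℝ) 1 from ⟨h0.le, hb⟩)
      (show (0:ℝ) ∈ Icc (0:ℝ) 1 by simp)
      (show 0 ≤ s / b by positivity)
      (show 0 ≤ 1 - s / b by rw [sub_nonneg, div_le_one h0]; exact hsb) (by ring)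
    simp only [gl_zero hz, smul_eq_mul, mul_zero, add_zero] at h
    rwa [div_mul_cancel₀ _ h0.ne'] at h
  have h1 := key a ha hab
  have h2 := key (b - a) (by linarith) (by linarith)
  have h3 : a / b * gl z b + (b - a) / b * gl z b = gl z b := by field_simp; ring
  linarith

/-- the sequence of preimages of 1 -/
noncomputable def xs (z : ℝ) (n : ℕ) : ℝ := (gl z)^[n] 1

lemma xs_succ (z : ℝ) (n : ℕ) : xs z (n+1) = gl z (xs z n) := by
  simp [xs, Function.iterate_succ_apply']

lemma xs_mem {z : ℝ} (hz : 0 < z) (n : ℕ) : xs z n ∈ Icc (0:ℝ) 1 := by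
  induction n with
  | zero => simp [xs]
  | succ n ih => rw [xs_succ]; exact gl_maps hz ih

lemma lbr_xs {z : ℝ} (hz : 0 < z) (n : ℕ) : lbr z (xs z (n+1)) = xs z n := by
  rw [xs_succ]; exact (gl_spec hz (xs_mem hz n)).2

lemma lbr_ge {z : ℝ} (hz : 0 < z) (hz1 : z < 1) {y : ℝ} (hy : y ∈ Icc (0:ℝ) 1) :
    y + y ^ 2 ≤ lbr z y := by
  have h1 : y ≤ y ^ z := by
    rcases eq_or_lt_of_le hy.1 with h | h
    · rw [← h]; positivity
    · simpa using Real.rpow_le_rpow_of_exponent_ge h hy.2 hz1.le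
  have h2 : (1:ℝ) ≤ 2 ^ z := Real.one_le_rpow (by norm_num) hz.le
  unfold lbr
  have h3 : y ≤ 2 ^ z * y ^ z := by nlinarith [hy.1]
  nlinarith [hy.1]

lemma xs_anti {z : ℝ} (hz : 0 < z) (hz1 : z < 1) : Antitone (xs z) := by
  apply antitone_nat_of_succ_le
  intro n
  have h := lbr_ge hz hz1 (xs_mem hz (n+1))
  rw [lbr_xs hz] at h
  nlinarith

lemma xs_le {z : ℝ} (hz : 0 < z) (hz1 : z < 1) (n : ℕ) : xs z n ≤ 2 / (n + 2) := by
  induction n with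
  | zero => simp [xs]
  | succ n ih =>
    by_contra! hc
    have h := lbr_ge hz hz1 (xs_mem hz (n+1))
    rw [lbr_xs hz] at h
    have h0 : (0:ℝ) ≤ n := n.cast_nonneg
    push_cast at hc
    have e : (2:ℝ) / (n + 2) ≤ 2 / (n + 1 + 2) + (2 / (n + 1 + 2)) ^ 2 := by
      rw [div_add' _ _ _ (by positivity), div_le_div_iff₀ (by positivity) (by positivity)]
      field_simp
      nlinarith
    have p : (0:ℝ) < 2 / (n + 1 + 2) := by positivity
    nlinarith

lemma xs_tendsto {z : ℝ} (hz : 0 < z) (hz1 : z < 1) {d : ℝ} (hd : 0 < d) :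
    ∃ n, xs z n ≤ d := by
  obtain ⟨n, hn⟩ := exists_nat_gt (2 / d)
  refine ⟨n, (xs_le hz hz1 n).trans ?_⟩
  rw [div_lt_iff₀ hd] at hn
  rw [div_le_iff₀ (by positivity)]
  nlinarith

lemma xs_pos {z : ℝ} (hz : 0 < z) (n : ℕ) : 0 < xs z n := by
  induction n with
  | zero => simp [xs]
  | succ n ih =>
    rw [xs_succ]
    have := gl_half_le hz (xs_mem hz n)
    linarith

lemma xs_lower {z : ℝ} (hz : 0 < z) (hz1 : z < 1) (n : ℕ) : 1 ≤ (xs z n) ^ z * (1 + 2 * n) := by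
  induction n with
  | zero => simp [xs]
  | succ n ih =>
    have hp := xs_pos hz (n+1)
    have e : xs z n ^ z ≤ (xs z (n+1)) ^ z * (1 + 2 * (xs z (n+1)) ^ z) := by
      rw [← lbr_xs hz n, lbr]
      set y := xs z (n+1)
      have hY : 0 ≤ y ^ z := by positivity
      have h2 : (2:ℝ) ^ z ≤ 2 := by
        simpa using Real.rpow_le_rpow_of_exponent_le (x := 2) (by norm_num) hz1.le
      have h2' : (0:ℝ) < 2 ^ z := by positivity
      rw [Real.mul_rpow hp.le (by positivity)]
      apply mul_le_mul_of_nonneg_left _ hY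
      calc (1 + 2 ^ z * y ^ z) ^ z ≤ (1 + 2 ^ z * y ^ z) ^ (1:ℝ) :=
            Real.rpow_le_rpow_of_exponent_le (by nlinarith) hz1.le
        _ ≤ 1 + 2 * y ^ z := by rw [Real.rpow_one]; nlinarith
    have hY : 0 < (xs z (n+1)) ^ z := by positivity
    have h0 : (0:ℝ) ≤ n := n.cast_nonneg
    set Y := (xs z (n+1)) ^ z
    push_cast
    have h1 : 1 ≤ Y * (1 + 2 * Y) * (1 + 2 * n) := ih.trans (by gcongr)
    by_contra! hc
    have h3 : Y * (1 + 2 * n) < 1 - 2 * Y := by linarith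
    have : Y * (1 + 2 * Y) * (1 + 2 * n) ≤ (1 - 2 * Y) * (1 + 2 * Y) := by nlinarith
    nlinarith

/-- inverse of right branch -/
noncomputable def gr (t : ℝ) : ℝ := (1 + t) / 2

lemma gr_maps {t : ℝ} (ht : t ∈ Icc (0:ℝ) 1) : gr t ∈ Icc (0:ℝ) 1 := by
  unfold gr
  exact ⟨by linarith [ht.1], by linarith [ht.2]⟩

/-- `V` composed with each inverse branch of depth `n` is `E`-close to concave. -/
def AC (z : ℝ) : ℕ → (ℝ → ℝ) → (ℝ → ℝ) → Prop
  | 0, V, E => ∃ W : ℝ → ℝ, ConcaveOn ℝ (Icc 0 1) W ∧ ∀ a b, 0 ≤ a → a ≤ b → b ≤ 1 →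
      |(V b - W b) - (V a - W a)| ≤ E b - E a
  | n+1, V, E => AC z n (fun t => V (gl z t)) (fun t => E (gl z t)) ∧
      AC z n (fun t => V (gr t)) (fun t => E (gr t))

lemma AC_add (z : ℝ) (k : ℝ) (n : ℕ) : ∀ V E V' E' : ℝ → ℝ, AC z n V E → AC z n V' E' →
    AC z n (fun t => V t + V' t + k) (fun t => E t + E' t) := by
  induction n with
  | zero =>
    rintro V E V' E' ⟨W, hW, h⟩ ⟨W', hW', h'⟩
    refine ⟨fun t => W t + W' t, hW.add hW', ?_⟩
    intro a b ha hab hb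
    have h1 := abs_le.1 (h a b ha hab hb)
    have h2 := abs_le.1 (h' a b ha hab hb)
    rw [abs_le]
    constructor <;> linarith [h1.1, h1.2, h2.1, h2.2]
  | succ n ih =>
    rintro V E V' E' ⟨h1, h2⟩ ⟨h1', h2'⟩
    exact ⟨ih _ _ _ _ h1 h1', ih _ _ _ _ h2 h2'⟩

lemma AC_congr {z : ℝ} (hz : 0 < z) (n : ℕ) : ∀ V E V' : ℝ → ℝ, (∀ t ∈ Icc (0:ℝ) 1, V t = V' t) →
    AC z n V E → AC z n V' E := by
  induction n with
  | zero =>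
    rintro V E V' hV ⟨W, hW, h⟩
    refine ⟨W, hW, ?_⟩
    intro a b ha hab hb
    rw [← hV a ⟨ha, hab.trans hb⟩, ← hV b ⟨ha.trans hab, hb⟩]
    exact h a b ha hab hb
  | succ n ih =>
    rintro V E V' hV ⟨h1, h2⟩
    exact ⟨ih _ _ _ (fun t ht => hV _ (gl_maps hz ht)) h1,
      ih _ _ _ (fun t ht => hV _ (gr_maps ht)) h2⟩

lemma AC_fix {z : ℝ} (hz : 0 < z) (H : ℝ → ℝ)
    (hH : ∀ t ∈ Icc (0:ℝ) 1, H t = H (gl z t) + H (gr t) - H (1/2)) (n : ℕ) :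
    ∀ E : ℝ → ℝ, AC z n H E → ∃ E' : ℝ → ℝ, E' 1 - E' 0 = E 1 - E 0 ∧ AC z 0 H E' := by
  induction n with
  | zero => intro E h; exact ⟨E, rfl, h⟩
  | succ n ih =>
    rintro E ⟨h1, h2⟩
    have h3 := AC_add z (-H (1/2)) n _ _ _ _ h1 h2
    have h4 := AC_congr hz n _ _ H (fun t ht => by rw [hH t ht]; ring) h3
    obtain ⟨E', e1, e2⟩ := ih _ h4
    refine ⟨E', ?_, e2⟩
    rw [e1, gl_one hz, gl_zero hz]
    simp only [gr]
    norm_num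
    ring

lemma gl_iter_mono {z : ℝ} (hz : 0 < z) (m : ℕ) : ∀ a b, 0 ≤ a → a ≤ b → b ≤ 1 →
    (gl z)^[m] a ≤ (gl z)^[m] b := by
  induction m with
  | zero => intro a b _ h _; simpa using h
  | succ m ih =>
    intro a b ha hab hb
    rw [Function.iterate_succ_apply, Function.iterate_succ_apply]
    have hA := gl_maps hz (t := a) ⟨ha, hab.trans hb⟩
    have hB := gl_maps hz (t := b) ⟨ha.trans hab, hb⟩
    exact ih _ _ hA.1 (gl_mono hz ⟨ha, hab.trans hb⟩ ⟨ha.trans hab, hb⟩ hab) hB.2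

/-- class of inverse branches -/
structure Br (z : ℝ) (m : ℕ) (G : ℝ → ℝ) : Prop where
  conc : ConcaveOn ℝ (Icc 0 1) G
  mono : MonotoneOn G (Icc 0 1)
  maps : ∀ t ∈ Icc (0:ℝ) 1, G t ∈ Icc (0:ℝ) 1
  modu : ∀ a b, 0 ≤ a → a ≤ b → b ≤ 1 → G b - G a ≤ (gl z)^[m] (b - a)

lemma Br.comp_aux {z : ℝ} {m : ℕ} {G : ℝ → ℝ} (h : Br z m G) {g : ℝ → ℝ}
    (gc : ConcaveOn ℝ (Icc 0 1) g) (gm : MonotoneOn g (Icc 0 1))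
    (gp : ∀ t ∈ Icc (0:ℝ) 1, g t ∈ Icc (0:ℝ) 1)
    (gs : ∀ a b, 0 ≤ a → a ≤ b → b ≤ 1 → g b - g a ≤ gl z (b - a)) (hz : 0 < z) :
    Br z (m+1) (fun t => G (g t)) := by
  refine ⟨⟨convex_Icc 0 1, ?_⟩, ?_, ?_, ?_⟩
  · intro a ha b hb p q hp hq hpq
    have h1 := h.conc.2 (gp a ha) (gp b hb) hp hq hpq
    refine h1.trans (h.mono ?_ ?_ (gc.2 ha hb hp hq hpq))
    · exact convex_Icc (0:ℝ) 1 (gp a ha) (gp b hb) hp hq hpq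
    · exact gp _ (convex_Icc (0:ℝ) 1 ha hb hp hq hpq)
  · intro a ha b hb hab
    exact h.mono (gp a ha) (gp b hb) (gm ha hb hab)
  · intro t ht
    exact h.maps _ (gp t ht)
  · intro a b ha hab hb
    have hA := gp a ⟨ha, hab.trans hb⟩
    have hB := gp b ⟨ha.trans hab, hb⟩
    have hg := gm ⟨ha, hab.trans hb⟩ ⟨ha.trans hab, hb⟩ hab
    rw [Function.iterate_succ_apply]
    refine (h.modu _ _ hA.1 hg hB.2).trans (gl_iter_mono hz m _ _ (by linarith) (gs a b ha hab hb) ?_)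
    exact (gl_maps hz ⟨by linarith, by linarith⟩).2

lemma AC_of_loc {z : ℝ} (hz : 0 < z) (H E : ℝ → ℝ) (d : ℝ)
    (hloc : ∀ l l', 0 ≤ l → l ≤ l' → l' ≤ 1 → l' - l ≤ d → ∃ c : ℝ, 0 ≤ c ∧
      ∀ a b, l ≤ a → a ≤ b → b ≤ l' → |H b - H a - c * (b - a)| ≤ E b - E a) (n : ℕ) :
    ∀ m G, Br z m G → xs z (n + m) ≤ d → AC z n (fun t => H (G t)) (fun t => E (G t)) := by
  induction n with
  | zero =>
    intro m G hG hd
    have m0 : (0:ℝ) ∈ Icc (0:ℝ) 1 := by simp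
    have m1 : (1:ℝ) ∈ Icc (0:ℝ) 1 := by simp
    have h1 := hG.modu 0 1 le_rfl zero_le_one le_rfl
    simp only [sub_zero] at h1
    rw [zero_add] at hd
    obtain ⟨c, hc, hh⟩ := hloc (G 0) (G 1) (hG.maps 0 m0).1 (hG.mono m0 m1 zero_le_one)
      (hG.maps 1 m1).2 (h1.trans hd)
    refine ⟨fun t => c * G t, hG.conc.smul hc, ?_⟩
    intro a b ha hab hb
    have mA : a ∈ Icc (0:ℝ) 1 := ⟨ha, hab.trans hb⟩
    have mB : b ∈ Icc (0:ℝ) 1 := ⟨ha.trans hab, hb⟩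
    have := hh (G a) (G b) (hG.mono m0 mA ha) (hG.mono mA mB hab) (hG.mono mB m1 hb)
    convert this using 2
    ring
  | succ n ih =>
    intro m G hG hd
    have e : n + (m + 1) = n + 1 + m := by ring
    constructor
    · refine ih (m+1) (fun t => G (gl z t)) ?_ (by rw [e]; exact hd)
      exact hG.comp_aux (gl_concave hz) (gl_mono hz) (fun t ht => gl_maps hz ht)
        (fun a b ha hab hb => gl_sub hz ha hab hb) hz
    · refine ih (m+1) (fun t => G (gr t)) ?_ (by rw [e]; exact hd)
      refine hG.comp_aux ⟨convex_Icc 0 1, ?_⟩ ?_ (fun t ht => gr_maps ht) ?_ hz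
      · intro a ha b hb p q hp hq hpq
        simp only [gr, smul_eq_mul]
        apply le_of_eq
        have : q = 1 - p := by linarith
        subst this; ring
      · intro a ha b hb hab
        simp only [gr]; linarith
      · intro a b ha hab hb
        refine le_trans (le_of_eq ?_) (gl_half_le hz ⟨by linarith, by linarith⟩)
        simp only [gr]; ring

lemma concave_of_loc {z : ℝ} (hz : 0 < z) (hz1 : z < 1) (H : ℝ → ℝ)
    (hH : ∀ t ∈ Icc (0:ℝ) 1, H t = H (gl z t) + H (gr t) - H (1/2))
    (hloc : ∀ ε > 0, ∃ E : ℝ → ℝ, ∃ d > 0, E 1 - E 0 ≤ ε ∧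
      ∀ l l', 0 ≤ l → l ≤ l' → l' ≤ 1 → l' - l ≤ d → ∃ c : ℝ, 0 ≤ c ∧
      ∀ a b, l ≤ a → a ≤ b → b ≤ l' → |H b - H a - c * (b - a)| ≤ E b - E a) :
    ConcaveOn ℝ (Icc 0 1) H := by
  refine ⟨convex_Icc 0 1, ?_⟩
  intro a ha b hb p q hp hq hpq
  have hm := convex_Icc (0:ℝ) 1 ha hb hp hq hpq
  apply le_of_forall_pos_le_add
  intro ε hε
  obtain ⟨E, d, hd, hE, hl⟩ := hloc (ε/2) (by positivity)
  obtain ⟨n, hn⟩ := xs_tendsto hz hz1 hd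
  have hid : Br z 0 (fun t => t) := by
    refine ⟨concaveOn_id (convex_Icc 0 1), fun a _ b _ h => h, fun t ht => ht, ?_⟩
    intro a b _ _ _; simp
  have h1 := AC_of_loc hz H E d hl n 0 _ hid (by simpa using hn)
  obtain ⟨E', e1, W, hW, h2⟩ := AC_fix hz H hH n E h1
  have key : ∀ t ∈ Icc (0:ℝ) 1, |(H t - W t) - (H 0 - W 0)| ≤ ε / 2 := by
    intro t ht
    have k1 := h2 0 t le_rfl ht.1 ht.2
    have k2 := (abs_nonneg _).trans (h2 t 1 ht.1 ht.2 le_rfl)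
    linarith
  have kA := abs_le.1 (key a ha)
  have kB := abs_le.1 (key b hb)
  have kM := abs_le.1 (key _ hm)
  have hw := hW.2 ha hb hp hq hpq
  simp only [smul_eq_mul] at *
  have l1 := mul_le_mul_of_nonneg_left kA.2 hp
  have l2 := mul_le_mul_of_nonneg_left kB.2 hq
  have : q = 1 - p := by linarith
  subst this
  nlinarith [kM.1]

lemma meas_diff (μ : Measure ℝ) [IsProbabilityMeasure μ] {a b : ℝ} (hab : a ≤ b) :
    μ.real (Iic b) - μ.real (Iic a) = μ.real (Ioc a b) := by
  rw [← Iic_sdiff_Iic, measureReal_sdiff (Iic_subset_Iic.2 hab) measurableSet_Iic]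

lemma loc_of_ac (μ : Measure ℝ) [IsProbabilityMeasure μ] (hac : μ ≪ volume) :
    ∀ ε > 0, ∃ E : ℝ → ℝ, ∃ d > 0, E 1 - E 0 ≤ ε ∧
      ∀ l l', 0 ≤ l → l ≤ l' → l' ≤ 1 → l' - l ≤ d → ∃ c : ℝ, 0 ≤ c ∧
      ∀ a b, l ≤ a → a ≤ b → b ≤ l' →
        |μ.real (Iic b) - μ.real (Iic a) - c * (b - a)| ≤ E b - E a := by
  intro ε hε
  set h : ℝ → ℝ := fun x => (μ.rnDeriv volume x).toReal with hh
  have hi : Integrable h volume := Measure.integrable_toReal_rnDeriv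
  obtain ⟨u, hus, hui, huc, huI⟩ := hi.exists_hasCompactSupport_integral_sub_le (ε := ε/2)
    (by positivity)
  have huc' : UniformContinuous u := hus.uniformContinuous_of_continuous huc
  obtain ⟨d, hd, hud⟩ := Metric.uniformContinuous_iff.1 huc' (ε/2) (by positivity)
  have hdi : Integrable (fun x => ‖h x - u x‖) volume := (hi.sub huI).norm
  refine ⟨fun t => (∫ x in (0:ℝ)..t, ‖h x - u x‖) + ε/2 * t, d/2, by positivity, ?_, ?_⟩
  · simp only [intervalIntegral.integral_same, mul_one, mul_zero, add_zero, sub_zero]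
    rw [intervalIntegral.integral_of_le zero_le_one]
    have : ∫ x in Ioc (0:ℝ) 1, ‖h x - u x‖ ≤ ∫ x, ‖h x - u x‖ :=
      setIntegral_le_integral hdi (Filter.Eventually.of_forall fun x => norm_nonneg _)
    linarith
  · intro l l' h0 hl h1 hld
    refine ⟨max (u l) 0, le_max_right _ _, ?_⟩
    intro a b ha hab hb
    rw [meas_diff μ hab]
    have e1 : μ.real (Ioc a b) = ∫ x in a..b, h x := by
      rw [intervalIntegral.integral_of_le hab]
      exact (Measure.setIntegral_toReal_rnDeriv hac _).symm
    have e2 : (max (u l) 0) * (b - a) = ∫ x in a..b, max (u l) 0 := by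
      rw [intervalIntegral.integral_const, smul_eq_mul]; ring
    have e3 : ε/2 * (b - a) = ∫ x in a..b, ε/2 := by
      rw [intervalIntegral.integral_const, smul_eq_mul]; ring
    have e4 : (∫ x in (0:ℝ)..b, ‖h x - u x‖) - (∫ x in (0:ℝ)..a, ‖h x - u x‖)
        = ∫ x in a..b, ‖h x - u x‖ :=
      intervalIntegral.integral_interval_sub_left hdi.intervalIntegrable hdi.intervalIntegrable
    have e5 : (∫ x in (0:ℝ)..b, ‖h x - u x‖) + ε/2 * b -
        ((∫ x in (0:ℝ)..a, ‖h x - u x‖) + ε/2 * a) = ∫ x in a..b, (‖h x - u x‖ + ε/2) := by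
      rw [intervalIntegral.integral_add hdi.intervalIntegrable intervalIntegrable_const, ← e3, ← e4]
      ring
    rw [e5, e1, e2, ← intervalIntegral.integral_sub hi.intervalIntegrable intervalIntegrable_const]
    rw [← Real.norm_eq_abs]
    apply intervalIntegral.norm_integral_le_of_norm_le hab
    · refine Filter.Eventually.of_forall fun x hx => ?_
      have hux : dist (u x) (u l) < ε/2 := by
        apply hud
        rw [Real.dist_eq, abs_lt]
        constructor <;> linarith [hx.1, hx.2]
      rw [Real.dist_eq] at hux
      have hp : 0 ≤ h x := ENNReal.toReal_nonneg
      rw [Real.norm_eq_abs, Real.norm_eq_abs]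
      have q1 := abs_lt.1 hux
      have q2 := le_abs_self (h x - u x)
      have q3 := neg_abs_le (h x - u x)
      have q4 := abs_nonneg (h x - u x)
      rw [abs_le]
      rcases max_cases (u l) 0 with ⟨k1, k2⟩ | ⟨k1, k2⟩ <;> rw [k1] <;>
        constructor <;> linarith [q1.1, q1.2]
    · exact hdi.intervalIntegrable.add intervalIntegrable_const

lemma ae_mem (μ : Measure ℝ) [IsProbabilityMeasure μ] (hs : μ (Icc (0:ℝ) 1)ᶜ = 0) :
    ∀ᵐ x ∂μ, x ∈ Icc (0:ℝ) 1 := by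
  rw [ae_iff]; exact hs

lemma H_fix {z : ℝ} (hz : 0 < z) (μ : Measure ℝ) [IsProbabilityMeasure μ] (hac : μ ≪ volume)
    (hs : μ (Icc (0:ℝ) 1)ᶜ = 0) (hinv : MeasurePreserving (lsv z) μ μ) :
    ∀ t ∈ Icc (0:ℝ) 1,
      μ.real (Iic t) = μ.real (Iic (gl z t)) + μ.real (Iic (gr t)) - μ.real (Iic (1/2)) := by
  intro t ht
  have hne : ∀ᵐ x ∂μ, x ≠ 1/2 := by
    rw [ae_iff]
    apply hac
    simp
  have e : lsv z ⁻¹' (Iic t) =ᵐ[μ] (Iic (gl z t) ∪ Ioc (1/2) (gr t) : Set ℝ) := by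
    filter_upwards [ae_mem μ hs, hne] with x hx hx2
    apply propext
    change lsv z x ≤ t ↔ (x ≤ gl z t ∨ (1/2 < x ∧ x ≤ gr t))
    have hg := (gl_spec hz ht).1.2
    unfold lsv gr
    rcases lt_or_gt_of_ne hx2 with h | h
    · rw [if_pos h]
      have := gl_le_iff hz ht hx.1
      unfold lbr at this
      rw [this]
      constructor
      · exact Or.inl
      · rintro (h' | h')
        · exact h'
        · linarith [h'.1]
    · rw [if_neg (by linarith)]
      constructor
      · intro h'
        exact Or.inr ⟨h, by linarith⟩
      · rintro (h' | h')
        · linarith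
        · linarith [h'.2]
  have e1 : μ.real (Iic t) = μ.real (lsv z ⁻¹' (Iic t)) := by
    rw [measureReal_def, measureReal_def, hinv.measure_preimage measurableSet_Iic.nullMeasurableSet]
  rw [e1, measureReal_congr e, measureReal_union, ← meas_diff μ]
  · ring
  · unfold gr; linarith [ht.1]
  · rw [Set.disjoint_left]
    intro x hx hx'
    have hg := (gl_spec hz ht).1.2
    simp only [mem_Iic, mem_Ioc] at hx hx'
    linarith [hx'.1]
  · exact measurableSet_Ioc

lemma H_one (μ : Measure ℝ) [IsProbabilityMeasure μ] (hs : μ (Icc (0:ℝ) 1)ᶜ = 0) :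
    μ.real (Iic 1) = 1 := by
  have : (Iic (1:ℝ) : Set ℝ) =ᵐ[μ] (univ : Set ℝ) := by
    filter_upwards [ae_mem μ hs] with x hx
    apply propext
    exact ⟨fun _ => trivial, fun _ => hx.2⟩
  rw [measureReal_congr this]; simp

lemma H_diff {z : ℝ} (hz : 0 < z) (hz1 : z < 1) (μ : Measure ℝ) [IsProbabilityMeasure μ]
    (hac : μ ≪ volume) (hs : μ (Icc (0:ℝ) 1)ᶜ = 0) (hinv : MeasurePreserving (lsv z) μ μ) (n : ℕ) :
    (1 - μ.real (Iic (1/2))) * xs z n ≤ μ.real (Iic (xs z n)) - μ.real (Iic (xs z (n+1))) := by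
  have hc := concave_of_loc hz hz1 (fun t => μ.real (Iic t)) (H_fix hz μ hac hs hinv)
    (loc_of_ac μ hac)
  have hx := xs_mem hz n
  have h := hc.2 (show (1/2:ℝ) ∈ Icc (0:ℝ) 1 by constructor <;> norm_num)
    (show (1:ℝ) ∈ Icc (0:ℝ) 1 by simp) (sub_nonneg.2 hx.2) hx.1 (by ring)
  simp only [smul_eq_mul, H_one μ hs] at h
  have e : (1 - xs z n) * (1/2) + xs z n * 1 = gr (xs z n) := by unfold gr; ring
  rw [e] at h
  rw [H_fix hz μ hac hs hinv _ hx, xs_succ]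
  linarith

lemma c_pos {z : ℝ} (hz : 0 < z) (hz1 : z < 1) (μ : Measure ℝ) [IsProbabilityMeasure μ]
    (hac : μ ≪ volume) (hs : μ (Icc (0:ℝ) 1)ᶜ = 0) (hinv : MeasurePreserving (lsv z) μ μ) :
    0 < 1 - μ.real (Iic (1/2)) := by
  by_contra! hc
  have mono : ∀ a b : ℝ, a ≤ b → μ.real (Iic a) ≤ μ.real (Iic b) := fun a b h =>
    measureReal_mono (Iic_subset_Iic.2 h)
  have le1 : ∀ a : ℝ, μ.real (Iic a) ≤ 1 := fun a => measureReal_le_one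
  have all : ∀ n, μ.real (Iic (xs z n)) = 1 := by
    intro n
    induction n with
    | zero => simpa [xs] using H_one μ hs
    | succ n ih =>
      have h := H_fix hz μ hac hs hinv _ (xs_mem hz n)
      rw [ih, ← xs_succ] at h
      have h2 := le1 (gr (xs z n))
      have h3 := le1 (xs z (n+1))
      linarith
  have null : μ (⋃ n, Ioi (xs z n)) = 0 := by
    apply measure_iUnion_null
    intro n
    rw [← compl_Iic, prob_compl_eq_zero_iff measurableSet_Iic]
    have := all n
    rw [measureReal_def, ENNReal.toReal_eq_one_iff] at this
    exact this
  have hz0 : μ {0} = 0 := hac (by simp)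
  have h3 : μ (((⋃ n, Ioi (xs z n)) ∪ {0}) ∪ (Icc (0:ℝ) 1)ᶜ) = 0 :=
    measure_union_null (measure_union_null null hz0) hs
  have h4 : (((⋃ n, Ioi (xs z n)) ∪ {0}) ∪ (Icc (0:ℝ) 1)ᶜ) = univ := by
    rw [eq_univ_iff_forall]
    intro x
    by_cases hx : x ∈ Icc (0:ℝ) 1
    · left
      rcases eq_or_lt_of_le hx.1 with h | h
      · right; simp [← h]
      · left
        obtain ⟨n, hn⟩ := xs_tendsto hz hz1 (half_pos h)
        exact mem_iUnion.2 ⟨n, by simp only [mem_Ioi]; linarith⟩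
    · right; exact hx
  rw [h4] at h3
  simp at h3

lemma H_lower {z : ℝ} (hz : 0 < z) (hz1 : z < 1) (μ : Measure ℝ) [IsProbabilityMeasure μ]
    (hac : μ ≪ volume) (hs : μ (Icc (0:ℝ) 1)ᶜ = 0) (hinv : MeasurePreserving (lsv z) μ μ) (n k : ℕ) :
    (1 - μ.real (Iic (1/2))) * (k * xs z (n + k)) ≤ μ.real (Iic (xs z n)) := by
  have hc := c_pos hz hz1 μ hac hs hinv
  have : ∀ j ≤ k, (1 - μ.real (Iic (1/2))) * (j * xs z (n + k)) ≤
      μ.real (Iic (xs z n)) - μ.real (Iic (xs z (n + j))) := by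
    intro j
    induction j with
    | zero => intro _; simp
    | succ j ih =>
      intro hj
      have h1 := ih (by omega)
      have h2 := H_diff hz hz1 μ hac hs hinv (n + j)
      have h3 : xs z (n + k) ≤ xs z (n + j) := xs_anti hz hz1 (by omega)
      have h4 := mul_le_mul_of_nonneg_left h3 hc.le
      push_cast
      rw [← add_assoc]
      linarith
  have h := this k le_rfl
  have h0 : 0 ≤ μ.real (Iic (xs z (n + k))) := measureReal_nonneg
  linarith

/-- The observable: clamp to `[0,1]`. -/
noncomputable def obs (x : ℝ) : ℝ := max 0 (min x 1)

lemma obs_nonneg (x : ℝ) : 0 ≤ obs x := le_max_left _ _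
lemma obs_le (x : ℝ) : obs x ≤ 1 := max_le zero_le_one (min_le_right _ _)
lemma obs_eq {x : ℝ} (hx : x ∈ Icc (0:ℝ) 1) : obs x = x := by
  unfold obs; rw [min_eq_left hx.2, max_eq_right hx.1]
lemma obs_meas : Measurable obs := measurable_const.max (measurable_id.min measurable_const)

lemma obs_holder : ∃ C r : ℝ≥0, 0 < r ∧ r ≤ 1 ∧ HolderOnWith C r obs (Set.Icc (0 : ℝ) 1) := by
  refine ⟨1, 1, one_pos, le_rfl, ?_⟩
  rw [holderOnWith_one]
  exact (((LipschitzWith.id).min_const 1).const_max 0).lipschitzOnWith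

/-- Birkhoff sums -/
noncomputable def bs (z m : ℝ) (n : ℕ) (x : ℝ) : ℝ :=
  ∑ k ∈ Finset.range n, (obs ((lsv z)^[k] x) - m)

lemma bs_succ (z m : ℝ) (n : ℕ) (x : ℝ) : bs z m (n+1) x = (obs x - m) + bs z m n (lsv z x) := by
  unfold bs
  rw [Finset.sum_range_succ']
  simp only [Function.iterate_succ_apply, Function.iterate_zero, id]
  ring

lemma integrable_bdd (μ : Measure ℝ) [IsProbabilityMeasure μ] {f : ℝ → ℝ} (hf : Measurable f) (C : ℝ)
    (h : ∀ x, |f x| ≤ C) : Integrable f μ :=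
  Integrable.of_bound hf.aestronglyMeasurable C (Filter.Eventually.of_forall h)

lemma bs_meas {z : ℝ} (hf : Measurable (lsv z)) (m : ℝ) (n : ℕ) : Measurable (bs z m n) := by
  unfold bs
  exact Finset.measurable_fun_sum _ fun k _ => (obs_meas.comp (hf.iterate k)).sub_const m

lemma bs_bdd {z m : ℝ} (hm : m ∈ Icc (0:ℝ) 1) (n : ℕ) (x : ℝ) : |bs z m n x| ≤ n := by
  unfold bs
  refine (Finset.abs_sum_le_sum_abs _ _).trans ?_
  calc _ ≤ ∑ k ∈ Finset.range n, (1:ℝ) := by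
        apply Finset.sum_le_sum
        intro k _
        have h1 := obs_nonneg ((lsv z)^[k] x)
        have h2 := obs_le ((lsv z)^[k] x)
        rw [abs_le]
        constructor <;> linarith [hm.1, hm.2]
    _ = n := by simp

lemma var_bound (z : ℝ) (μ : Measure ℝ) [IsProbabilityMeasure μ]
    (hinv : MeasurePreserving (lsv z) μ μ) (m : ℝ) (hm : m = ∫ x, obs x ∂μ) (S : ℝ)
    (hS : ∀ n : ℕ, ∑ k ∈ Finset.range n,
      |∫ x, obs x * obs ((lsv z)^[k + 1] x) ∂μ - (∫ x, obs x ∂μ) * ∫ x, obs x ∂μ| ≤ S) (n : ℕ) :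
    ∫ x, (bs z m n x) ^ 2 ∂μ ≤ n * (1 + 2 * S) := by
  have hf := hinv.measurable
  have io : Integrable obs μ := integrable_bdd μ obs_meas 1 fun x => by
    rw [abs_of_nonneg (obs_nonneg x)]; exact obs_le x
  have hm01 : m ∈ Icc (0:ℝ) 1 := by
    constructor
    · rw [hm]; exact integral_nonneg obs_nonneg
    · rw [hm]
      calc ∫ x, obs x ∂μ ≤ ∫ x, (1:ℝ) ∂μ := integral_mono io (integrable_const _) obs_le
        _ = 1 := by simp
  have ob : ∀ x, |obs x - m| ≤ 1 := by
    intro x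
    rw [abs_le]
    constructor <;> linarith [hm01.1, hm01.2, obs_nonneg x, obs_le x]
  have om : Measurable (fun x => obs x - m) := obs_meas.sub_const m
  have corr : ∀ k, ∫ x, (obs x - m) * (obs ((lsv z)^[k+1] x) - m) ∂μ =
      ∫ x, obs x * obs ((lsv z)^[k + 1] x) ∂μ - (∫ x, obs x ∂μ) * ∫ x, obs x ∂μ := by
    intro k
    have mk : Measurable (fun x => obs ((lsv z)^[k+1] x)) := obs_meas.comp (hf.iterate (k+1))
    have ik : Integrable (fun x => obs ((lsv z)^[k+1] x)) μ := integrable_bdd μ mk 1 fun x => by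
      rw [abs_of_nonneg (obs_nonneg _)]; exact obs_le _
    have ikk : Integrable (fun x => obs x * obs ((lsv z)^[k+1] x)) μ :=
      integrable_bdd μ (obs_meas.mul mk) 1 fun x => by
        rw [abs_of_nonneg (mul_nonneg (obs_nonneg _) (obs_nonneg _))]
        exact mul_le_one₀ (obs_le _) (obs_nonneg _) (obs_le _)
    have e1 : ∫ x, obs ((lsv z)^[k+1] x) ∂μ = m := by
      have hp := hinv.iterate (k+1)
      rw [hm]
      conv_rhs => rw [← hp.map_eq]
      rw [integral_map hp.measurable.aemeasurable obs_meas.aestronglyMeasurable]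
    have e2 : ∀ x, (obs x - m) * (obs ((lsv z)^[k+1] x) - m) =
        obs x * obs ((lsv z)^[k+1] x) - m * obs x - m * obs ((lsv z)^[k+1] x) + m * m := by
      intro x; ring
    simp_rw [e2]
    rw [integral_add, integral_sub, integral_sub, integral_const_mul, integral_const_mul, e1, ← hm]
    · simp
    · exact ikk
    · exact io.const_mul m
    · exact ikk.sub (io.const_mul m)
    · exact ik.const_mul m
    · exact (ikk.sub (io.const_mul m)).sub (ik.const_mul m)
    · exact integrable_const _
  induction n with
  | zero => simp [bs]
  | succ n ih =>
    have bm := bs_meas hf m n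
    have e : ∀ x, (bs z m (n+1) x) ^ 2 = (obs x - m) ^ 2 +
        2 * ((obs x - m) * bs z m n (lsv z x)) + (bs z m n (lsv z x)) ^ 2 := by
      intro x; rw [bs_succ]; ring
    have i1 : Integrable (fun x => (obs x - m) ^ 2) μ := integrable_bdd μ (om.pow_const 2) 1 fun x => by
      rw [abs_pow]
      exact pow_le_one₀ (abs_nonneg _) (ob x)
    have i2 : Integrable (fun x => (obs x - m) * bs z m n (lsv z x)) μ :=
      integrable_bdd μ (om.mul (bm.comp hf)) n fun x => by
        rw [abs_mul]
        calc _ ≤ 1 * (n:ℝ) := mul_le_mul (ob x) (bs_bdd hm01 n _) (abs_nonneg _) zero_le_one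
          _ = n := one_mul _
    have i3 : Integrable (fun x => (bs z m n (lsv z x)) ^ 2) μ :=
      integrable_bdd μ ((bm.comp hf).pow_const 2) ((n:ℝ)^2) fun x => by
        rw [abs_pow]
        exact pow_le_pow_left₀ (abs_nonneg _) (bs_bdd hm01 n _) 2
    simp_rw [e]
    have i12 : Integrable (fun x => (obs x - m) ^ 2 + 2 * ((obs x - m) * bs z m n (lsv z x))) μ :=
      i1.add (i2.const_mul 2)
    rw [integral_add i12 i3, integral_add i1 (i2.const_mul 2),
      integral_const_mul]
    have l1 : ∫ x, (obs x - m) ^ 2 ∂μ ≤ 1 := by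
      calc _ ≤ ∫ x, (1:ℝ) ∂μ := integral_mono i1 (integrable_const _) fun x => by
            have := pow_le_one₀ (n := 2) (abs_nonneg _) (ob x)
            rwa [sq_abs] at this
        _ = 1 := by simp
    have l3 : ∫ x, (bs z m n (lsv z x)) ^ 2 ∂μ = ∫ x, (bs z m n x) ^ 2 ∂μ := by
      conv_rhs => rw [← hinv.map_eq]
      rw [integral_map hf.aemeasurable (bm.pow_const 2).aestronglyMeasurable]
    have l2 : ∫ x, (obs x - m) * bs z m n (lsv z x) ∂μ ≤ S := by
      refine le_trans ?_ (hS n)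
      unfold bs
      simp_rw [Finset.mul_sum, ← Function.iterate_succ_apply]
      rw [integral_finsetSum]
      · apply Finset.sum_le_sum
        intro k _
        rw [← corr k]
        exact le_abs_self _
      · intro k _
        refine integrable_bdd μ (om.mul ((obs_meas.comp (hf.iterate (k+1))).sub_const m)) 1 fun x => ?_
        rw [abs_mul]
        exact mul_le_one₀ (ob _) (abs_nonneg _) (ob _)
    rw [l3]
    push_cast
    linarith

lemma orbit_small {z : ℝ} (hz : 0 < z) (hz1 : z < 1) (n k : ℕ) : ∀ x, 0 ≤ x → x ≤ xs z (n + 1 + k) →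
    (lsv z)^[k] x ∈ Icc 0 (xs z (n + 1)) := by
  induction k with
  | zero => intro x h0 h1; exact ⟨h0, h1⟩
  | succ k ih =>
    intro x h0 h1
    rw [Function.iterate_succ_apply]
    rw [← add_assoc] at h1
    have h2 : xs z (n + 1 + k + 1) < 1/2 := by
      have ha : xs z (n + 1 + k + 1) ≤ xs z 2 := xs_anti hz hz1 (by omega)
      have hb := lbr_ge hz hz1 (xs_mem hz 2)
      rw [lbr_xs hz 1] at hb
      have hc : xs z 1 = 1/2 := by rw [xs_succ]; simpa [xs] using gl_one hz
      have := xs_pos hz 2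
      nlinarith
    have e : lsv z x = lbr z x := by
      unfold lsv lbr; rw [if_pos (by linarith)]
    rw [e]
    apply ih
    · unfold lbr; positivity
    · rw [← lbr_xs hz]
      exact (lbr_strictMono hz).monotoneOn h0 (xs_mem hz _).1 h1

lemma lower_bound {z : ℝ} (hz : 0 < z) (hz1 : z < 1) (μ : Measure ℝ) [IsProbabilityMeasure μ]
    (hs : μ (Icc (0:ℝ) 1)ᶜ = 0) (hinv : MeasurePreserving (lsv z) μ μ)
    (m : ℝ) (hm : m ∈ Icc (0:ℝ) 1) (n : ℕ) (hn : xs z (n+1) ≤ m / 2) :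
    (n * (m / 2)) ^ 2 * μ.real (Iic (xs z (n + 1 + n))) ≤ ∫ x, (bs z m n x) ^ 2 ∂μ := by
  have bm := bs_meas hinv.measurable m n
  have i3 : Integrable (fun x => (bs z m n x) ^ 2) μ :=
    integrable_bdd μ (bm.pow_const 2) ((n:ℝ)^2) fun x => by
      rw [abs_pow]
      exact pow_le_pow_left₀ (abs_nonneg _) (bs_bdd hm n _) 2
  set A := Iic (xs z (n + 1 + n))
  have e : ∫ x, A.indicator (fun _ => ((n:ℝ) * (m / 2)) ^ 2) x ∂μ = (n * (m / 2)) ^ 2 * μ.real A := by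
    rw [integral_indicator measurableSet_Iic, setIntegral_const, smul_eq_mul, mul_comm]
  rw [← e]
  apply integral_mono_ae ((integrable_const _).indicator measurableSet_Iic) i3
  filter_upwards [ae_mem μ hs] with x hx
  by_cases hA : x ∈ A
  · rw [indicator_of_mem hA]
    have hb : bs z m n x ≤ -(n * (m / 2)) := by
      unfold bs
      calc _ ≤ ∑ k ∈ Finset.range n, (-(m/2)) := by
            apply Finset.sum_le_sum
            intro k hk
            have hk' := Finset.mem_range.1 hk
            have h1 : x ≤ xs z (n + 1 + k) := le_trans hA (xs_anti hz hz1 (by omega))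
            have h2 := orbit_small hz hz1 n k x hx.1 h1
            rw [obs_eq ⟨h2.1, h2.2.trans (xs_mem hz _).2⟩]
            linarith [h2.2]
        _ = _ := by simp
    have h0 : 0 ≤ n * (m / 2) := by have := hm.1; positivity
    nlinarith
  · rw [indicator_of_notMem hA]
    positivity

/-- For `z ∈ (1/2, 1)` and `μ` the unique absolutely continuous `f_z`-invariant
Borel probability measure on `[0,1]`, there are Hölder continuous observables `φ, ψ` whose
correlations are not summable. -/
theorem lsv_correlations_not_summable
    (z : ℝ) (hz : z ∈ Set.Ioo (1 / 2 : ℝ) 1)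
    (μ : Measure ℝ) (hμprob : IsProbabilityMeasure μ) (hμsupp : μ (Set.Icc (0 : ℝ) 1)ᶜ = 0)
    (hμac : μ ≪ volume) (hμinv : MeasurePreserving (lsv z) μ μ) :
    ∃ φ ψ : ℝ → ℝ,
      (∃ C r : ℝ≥0, 0 < r ∧ r ≤ 1 ∧ HolderOnWith C r φ (Set.Icc (0 : ℝ) 1)) ∧
      (∃ C r : ℝ≥0, 0 < r ∧ r ≤ 1 ∧ HolderOnWith C r ψ (Set.Icc (0 : ℝ) 1)) ∧
      ¬ Summable (fun n : ℕ =>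
        |∫ x, φ x * ψ ((lsv z)^[n + 1] x) ∂μ - (∫ x, φ x ∂μ) * ∫ x, ψ x ∂μ|) := by
  refine ⟨obs, obs, obs_holder, obs_holder, fun hsum => ?_⟩
  obtain ⟨hz2, hz1⟩ := hz
  have hz0 : 0 < z := by linarith
  set m := ∫ x, obs x ∂μ with hm
  have io : Integrable obs μ := integrable_bdd μ obs_meas 1 fun x => by
    rw [abs_of_nonneg (obs_nonneg x)]; exact obs_le x
  have hm1 : m ≤ 1 := by
    calc ∫ x, obs x ∂μ ≤ ∫ x, (1:ℝ) ∂μ := integral_mono io (integrable_const _) obs_le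
      _ = 1 := by simp
  have hm0 : 0 < m := by
    rcases eq_or_lt_of_le (show 0 ≤ m from integral_nonneg obs_nonneg) with h | h
    · exfalso
      have h1 := (integral_eq_zero_iff_of_nonneg obs_nonneg io).1 h.symm
      have h2 : ∀ᵐ x ∂μ, x ≠ 0 := by
        rw [ae_iff]; apply hμac; simp
      have h3 : ∀ᵐ _ ∂μ, False := by
        filter_upwards [h1, h2, ae_mem μ hμsupp] with x a1 a2 a3
        rw [obs_eq a3] at a1
        exact a2 a1
      simp at h3
      exact (IsProbabilityMeasure.ne_zero μ) h3
    · exact h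
  have hV := var_bound z μ hμinv m hm _ (fun n => hsum.sum_le_tsum _ (fun i _ => abs_nonneg _))
  set B := 1 + 2 * ∑' n : ℕ, |∫ x, obs x * obs ((lsv z)^[n + 1] x) ∂μ - m * m| with hB
  have hB0 : 0 < B := by
    have : 0 ≤ ∑' n : ℕ, |∫ x, obs x * obs ((lsv z)^[n + 1] x) ∂μ - m * m| :=
      tsum_nonneg fun _ => abs_nonneg _
    linarith
  have hc := c_pos hz0 hz1 μ hμac hμsupp hμinv
  set c := 1 - μ.real (Iic (1/2)) with hcdef
  obtain ⟨N, hN⟩ := xs_tendsto hz0 hz1 (half_pos hm0)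
  -- upper bound for `n ^ 2 * xs`
  have key : ∀ n : ℕ, N ≤ n → 1 ≤ n → (n:ℝ) ^ 2 * xs z (4 * n) ≤ 4 * B / (c * m ^ 2) := by
    intro n hn hn1
    have hx : xs z (n+1) ≤ m / 2 := (xs_anti hz0 hz1 (by omega)).trans hN
    have h1 := lower_bound hz0 hz1 μ hμsupp hμinv m ⟨hm0.le, hm1⟩ n hx
    have h2 := H_lower hz0 hz1 μ hμac hμsupp hμinv (n + 1 + n) n
    have h3 := hV n
    have h4 : xs z (4 * n) ≤ xs z (n + 1 + n + n) := xs_anti hz0 hz1 (by omega)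
    have hnp : (0:ℝ) < n := by exact_mod_cast hn1
    have h5 : c * (n * xs z (4 * n)) ≤ μ.real (Iic (xs z (n + 1 + n))) :=
      le_trans (by gcongr) h2
    have h6 : (n * (m / 2)) ^ 2 * (c * (n * xs z (4 * n))) ≤ n * B :=
      (mul_le_mul_of_nonneg_left h5 (by positivity)).trans (h1.trans h3)
    rw [le_div_iff₀ (by positivity)]
    have h7 : n * ((n:ℝ) ^ 2 * xs z (4 * n) * (c * m ^ 2)) ≤ n * (4 * B) := by nlinarith
    exact le_of_mul_le_mul_left h7 hnp
  set K := 4 * B / (c * m ^ 2)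
  -- lower bound on `xs`
  have key2 : ∀ n : ℕ, N ≤ n → 1 ≤ n → (n:ℝ) ^ (2 * z - 1) ≤ 9 * K ^ z := by
    intro n hn hn1
    have hnp : (0:ℝ) < n := by exact_mod_cast hn1
    have h1n : (1:ℝ) ≤ n := by exact_mod_cast hn1
    have h1 := xs_lower hz0 hz1 (4 * n)
    have hxp := xs_pos hz0 (4 * n)
    push_cast at h1
    have h2 : ((n:ℝ) ^ 2 * xs z (4 * n)) ^ z ≤ K ^ z :=
      Real.rpow_le_rpow (by positivity) (key n hn hn1) hz0.le
    rw [Real.mul_rpow (by positivity) hxp.le] at h2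
    have h3 : ((n:ℝ) ^ 2) ^ z = (n:ℝ) ^ (2 * z - 1) * n := by
      rw [← Real.rpow_natCast, ← Real.rpow_mul hnp.le]
      nth_rewrite 3 [← Real.rpow_one (n:ℝ)]
      rw [← Real.rpow_add hnp]
      congr 1
      push_cast; ring
    rw [h3] at h2
    set q := (n:ℝ) ^ (2 * z - 1)
    have hq : 0 ≤ q := by positivity
    have hY : 0 ≤ xs z (4 * n) ^ z := by positivity
    have h4 : 1 ≤ xs z (4 * n) ^ z * (9 * n) := h1.trans (by gcongr; linarith)
    calc q = q * 1 := (mul_one q).symm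
      _ ≤ q * (xs z (4 * n) ^ z * (9 * n)) := by gcongr
      _ = 9 * (q * n * xs z (4 * n) ^ z) := by ring
      _ ≤ 9 * K ^ z := by gcongr
  have ht : Filter.Tendsto (fun n : ℕ => (n:ℝ) ^ (2 * z - 1)) Filter.atTop Filter.atTop :=
    (_root_.tendsto_rpow_atTop (by linarith)).comp tendsto_natCast_atTop_atTop
  obtain ⟨n, h1, h2, h3⟩ := ((ht.eventually_gt_atTop (9 * K ^ z)).and
    ((Filter.eventually_ge_atTop N).and (Filter.eventually_ge_atTop 1))).exists
  exact absurd (key2 n h2 h3) (not_le.2 h1)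
end
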